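/- arXiv:math/0703630 — 2 statements merged into one kernel-verified Lean document; each statement's English description precedes it below -/
import Mathlib

section
/- Let (U,ρ) be a complete separable metric space and let t ↦ μ[·;t] belong to W_1(ℝ, M(U)). Then Mod μ[·;·] = Σ_{𝓕 ∈ C_b(U,ℝ)} Mod ∫_U 𝓕(x) μ[dx;·]; that is, the module of the measure-valued function μ[·;·] equals the additive group generated by the union over all continuous bounded 𝓕 : U → ℝ of the modules of the Weyl almost periodic real functions t ↦ ∫_U 𝓕(x) μ[dx;t]. -/
open MeasureTheory Filter Topology TopologicalSpace
open scoped ENNReal Pointwise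

noncomputable section

/-- The truncated ("bounded") distance `ρ'(x,y) = min {1, ρ(x,y)}` on a metric space. -/
def bdist {α : Type*} [PseudoMetricSpace α] : α → α → ℝ := fun x y => min 1 (dist x y)

/-- The Hausdorff distance `dist_{ρ'}` (corresponding to the truncated metric `ρ'`)
between non-empty closed subsets of a metric space. -/
def clDist {α : Type*} [MetricSpace α] : Closeds α → Closeds α → ℝ :=
  fun A B => (min 1 (EMetric.hausdorffEdist (A : Set α) (B : Set α))).toReal

/-- The Hausdorff distance `dist_ρ` between (non-empty closed bounded) subsets. -/
def clbDist {α : Type*} [MetricSpace α] : Closeds α → Closeds α → ℝ :=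
  fun A B => Metric.hausdorffDist (A : Set α) (B : Set α)

/-- `D^{(d)}_{p,l}(f,g) = ( sup_ξ (1/l) ∫_ξ^{ξ+l} d(f t, g t)^p dt )^{1/p}`,
valued in `ℝ≥0∞`. -/
def weylD {α : Type*} (d : α → α → ℝ) (p l : ℝ) (f g : ℝ → α) : ℝ≥0∞ :=
  (⨆ ξ : ℝ, ENNReal.ofReal (1 / l) *
      ∫⁻ t in Set.Icc ξ (ξ + l), ENNReal.ofReal (d (f t) (g t) ^ p)) ^ (1 / p)

/-- The Weyl semimetric `D^{(d)}_p(f,g) = lim_{l → +∞} D^{(d)}_{p,l}(f,g)`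
(the limit exists; it is formalized here as a `limsup`). -/
def weylDinf {α : Type*} (d : α → α → ℝ) (p : ℝ) (f g : ℝ → α) : ℝ≥0∞ :=
  Filter.limsup (fun l => weylD d p l f g) Filter.atTop

/-- Membership in `M_p(ℝ, α)`: `f` is (strongly) measurable and
`sup_ξ ∫_ξ^{ξ+1} d(f t, x₀)^p dt < +∞`. -/
def MemMp {α : Type*} [TopologicalSpace α] (d : α → α → ℝ) (p : ℝ) (x₀ : α)
    (f : ℝ → α) : Prop :=
  AEStronglyMeasurable f MeasureTheory.volume ∧
  ∃ C : ℝ, ∀ ξ : ℝ,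
    (∫⁻ t in Set.Icc ξ (ξ + 1), ENNReal.ofReal (d (f t) x₀ ^ p)) ≤ ENNReal.ofReal C

/-- A set `T ⊆ ℝ` is relatively dense. -/
def RelDense (T : Set ℝ) : Prop := ∃ a > 0, ∀ ξ : ℝ, (Set.Icc ξ (ξ + a) ∩ T).Nonempty

/-- The set of `(ε, D^{(d)}_{p,l})`-almost periods of `f`. -/
def APeriodsL {α : Type*} (d : α → α → ℝ) (p l ε : ℝ) (f : ℝ → α) : Set ℝ :=
  {τ | weylD d p l f (fun t => f (t + τ)) < ENNReal.ofReal ε}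

/-- The set `P^{(d)}_p(ε; f)` of `(ε, D^{(d)}_p)`-almost periods of `f`. -/
def APeriods {α : Type*} (d : α → α → ℝ) (p ε : ℝ) (f : ℝ → α) : Set ℝ :=
  {τ | weylDinf d p f (fun t => f (t + τ)) < ENNReal.ofReal ε}

/-- Membership in the space `W_p(ℝ, α)` of Weyl almost periodic functions of order `p`
w.r.t. the distance `d` (with distinguished point `x₀`). -/
def MemWp {α : Type*} [TopologicalSpace α] (d : α → α → ℝ) (p : ℝ) (x₀ : α)
    (f : ℝ → α) : Prop :=
  MemMp d p x₀ f ∧ ∀ ε > 0, ∃ l > 0, RelDense (APeriodsL d p l ε f)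

/-- The module `Mod f`: the additive group of all `λ ∈ ℝ` such that `e^{iλτ_j} → 1`
for every `f`-returning sequence `{τ_j}` (a sequence with `D^{(d)}_1(f, f(·+τ_j)) → 0`,
where `d` is the relevant bounded distance). -/
def WMod {α : Type*} (d : α → α → ℝ) (f : ℝ → α) : Set ℝ :=
  {lam : ℝ | ∀ τ : ℕ → ℝ,
    Tendsto (fun j => weylDinf d 1 f (fun t => f (t + τ j))) atTop (nhds 0) →
    Tendsto (fun j => Complex.exp (Complex.I * ((lam * τ j : ℝ) : ℂ))) atTop (nhds 1)}

/-- `κ_W(T) = lim_{l → +∞} sup_ξ (1/l) meas([ξ, ξ+l] ∩ T)` (formalized as a `limsup`). -/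
def kappaW (T : Set ℝ) : ℝ≥0∞ :=
  Filter.limsup (fun l : ℝ => ⨆ ξ : ℝ,
    ENNReal.ofReal (1 / l) * MeasureTheory.volume (Set.Icc ξ (ξ + l) ∩ T)) Filter.atTop

/-- Membership in `M*_p(ℝ, α)`. -/
def MemMpStar {α : Type*} [TopologicalSpace α] (d : α → α → ℝ) (p : ℝ) (x₀ : α)
    (f : ℝ → α) : Prop :=
  MemMp d p x₀ f ∧
  ∀ ε > 0, ∃ δ > 0, ∀ T : Set ℝ, MeasurableSet T → kappaW T < ENNReal.ofReal δ →
    Filter.limsup (fun l : ℝ => ⨆ ξ : ℝ, ENNReal.ofReal (1 / l) *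
        ∫⁻ t in Set.Icc ξ (ξ + l) ∩ T, ENNReal.ofReal (d (f t) x₀ ^ p)) Filter.atTop
      < ENNReal.ofReal ε

/-- Distance from a point to a set w.r.t. the distance `d`, valued in `ℝ≥0∞`
(`∞` for the empty set). -/
def dInfDist {α : Type*} (d : α → α → ℝ) (x : α) (K : Set α) : ℝ≥0∞ :=
  ⨅ y ∈ K, ENNReal.ofReal (d x y)

/-- Membership in `W̃_p(ℝ, α)`: conditions 1) (relatively dense sets of
`(ε, D^{(d)}_p)`-almost periods) and 2) (approximate compactness of values). -/
def MemWpTilde {α : Type*} [TopologicalSpace α] (d : α → α → ℝ) (p : ℝ) (x₀ : α)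
    (f : ℝ → α) : Prop :=
  MemMp d p x₀ f ∧
  (∀ ε > 0, RelDense (APeriods d p ε f)) ∧
  (∀ ε > 0, ∀ δ > 0, ∃ K : Set α, IsCompact K ∧
      kappaW {t | ENNReal.ofReal ε ≤ dInfDist d (f t) K} < ENNReal.ofReal δ)

/-- The support of a Borel measure on a topological space. -/
def measSupport {α : Type*} [TopologicalSpace α] [MeasurableSpace α]
    (μ : Measure α) : Set α :=
  {x | ∀ V : Set α, IsOpen V → x ∈ V → 0 < μ V}

/-- `r_δ(x, μ) = inf { r > 0 : μ[U_r(x)] > δ }`. -/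
def rdelta {α : Type*} [PseudoMetricSpace α] [MeasurableSpace α]
    (x : α) (μ : Measure α) (δ : ℝ) : ℝ :=
  sInf {r : ℝ | 0 < r ∧ ENNReal.ofReal δ < μ (Metric.ball x r)}

/-- The Lévy–Prokhorov distance on Borel probability measures. -/
def lpDist {α : Type*} [MeasurableSpace α] [PseudoEMetricSpace α] :
    ProbabilityMeasure α → ProbabilityMeasure α → ℝ :=
  fun μ ν => MeasureTheory.levyProkhorovDist (μ : Measure α) (ν : Measure α)

end

open MeasureTheory Filter Topology TopologicalSpace
open scoped ENNReal Pointwise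

section PW
variable {G : Type*} [NormedAddCommGroup G] [CompactSpace G]

/-- operator attached to a continuous kernel `K : G → H`. -/
noncomputable def kerOp {H : Type*} [NormedAddCommGroup H] [InnerProductSpace ℂ H] (K : C(G, H)) :
    H →L[ℂ] C(G, ℂ) :=
  LinearMap.mkContinuous
    { toFun := fun φ => ⟨fun x => inner ℂ (K x) φ, by fun_prop⟩
      map_add' := fun a b => by ext x; simp
      map_smul' := fun c a => by ext x; simp } ‖K‖ (by
    intro φ
    rw [ContinuousMap.norm_le _ (by positivity)]
    intro x
    exact (norm_inner_le_norm _ _).trans (by gcongr; exact K.norm_coe_le_norm x))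

theorem kerOp_apply {H : Type*} [NormedAddCommGroup H] [InnerProductSpace ℂ H] (K : C(G, H))
    (φ : H) (x : G) : kerOp K φ x = inner ℂ (K x) φ := rfl

theorem kerOp_compact {H : Type*} [NormedAddCommGroup H] [InnerProductSpace ℂ H] (K : C(G, H)) :
    IsCompactOperator (kerOp K) := by
  refine (isCompactOperator_iff_image_closedBall_subset_compact (kerOp K : H →ₗ[ℂ] C(G, ℂ)) one_pos).2 ?_
  let A : Set C(G, ℂ) := {f | (∀ x, ‖f x‖ ≤ ‖K‖) ∧ ∀ x y, ‖f x - f y‖ ≤ ‖K x - K y‖}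
  refine ⟨A, ?_, ?_⟩
  · apply ArzelaAscoli.isCompact_of_equicontinuous
    · have h1 : ContinuousMap.toFun '' A = {f : G → ℂ | (∀ x, ‖f x‖ ≤ ‖K‖) ∧ ∀ x y, ‖f x - f y‖ ≤ ‖K x - K y‖} := by
        ext f
        constructor
        · rintro ⟨g, hg, rfl⟩; exact hg
        · intro hf
          have hc : Continuous f := by
            rw [continuous_iff_continuousAt]
            intro x
            rw [ContinuousAt, tendsto_iff_norm_sub_tendsto_zero]
            refine squeeze_zero (fun _ => norm_nonneg _) (fun y => hf.2 y x) ?_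
            rw [← tendsto_iff_norm_sub_tendsto_zero]
            exact K.continuous.continuousAt
          exact ⟨⟨f, hc⟩, hf, rfl⟩
      rw [h1]
      refine (isCompact_univ_pi (fun _ : G => isCompact_closedBall (0:ℂ) ‖K‖)).of_isClosed_subset ?_ ?_
      · simp only [Set.setOf_and, Set.setOf_forall]
        refine IsClosed.inter (isClosed_iInter fun x => ?_) (isClosed_iInter fun x => isClosed_iInter fun y => ?_)
        · exact isClosed_le (by fun_prop) (by fun_prop)
        · exact isClosed_le (by fun_prop) (by fun_prop)
      · intro f hf x _
        simpa using hf.1 x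
    · intro x
      rw [Metric.equicontinuousAt_iff]
      intro ε hε
      obtain ⟨δ, hδ, h⟩ := Metric.continuous_iff.1 K.continuous x ε hε
      refine ⟨δ, hδ, fun y hy f => ?_⟩
      rw [dist_eq_norm]
      have := h y hy
      rw [dist_eq_norm] at this
      calc _ ≤ ‖K x - K y‖ := f.2.2 x y
        _ < ε := by rwa [norm_sub_rev]
  · rintro _ ⟨φ, hφ, rfl⟩
    have hφ : ‖φ‖ ≤ 1 := by simpa using hφ
    constructor
    · intro x
      exact (norm_inner_le_norm _ _).trans (by
        have := K.norm_coe_le_norm x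
        nlinarith [norm_nonneg (K x)])
    · intro x y
      have : kerOp K φ x - kerOp K φ y = inner ℂ (K x - K y) φ := by
        simp [kerOp_apply, inner_sub_left]
      change ‖kerOp K φ x - kerOp K φ y‖ ≤ _
      rw [this]
      exact (norm_inner_le_norm _ _).trans (by nlinarith [norm_nonneg (K x - K y)])

/-- translation of continuous functions -/
noncomputable def trC (y : G) : C(G, ℂ) →ₗ[ℂ] C(G, ℂ) where
  toFun f := ⟨fun x => f (x + y), by fun_prop⟩
  map_add' _ _ := rfl
  map_smul' _ _ := rfl

theorem trC_apply (y : G) (f : C(G, ℂ)) (x : G) : trC y f x = f (x + y) := rfl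

/-- A finite-dimensional nonzero translation invariant space contains a joint eigenvector. -/
theorem exists_joint (E : Submodule ℂ C(G, ℂ)) [FiniteDimensional ℂ E] (hE : E ≠ ⊥)
    (hinv : ∀ y, ∀ f ∈ E, trC y f ∈ E) :
    ∃ f ∈ E, f ≠ 0 ∧ ∀ y, ∃ c : ℂ, trC y f = c • f := by
  induction h : Module.finrank ℂ E using Nat.strong_induction_on generalizing E with
  | _ n ih =>
  by_cases hall : ∀ y, ∃ c : ℂ, ∀ f ∈ E, trC y f = c • f
  · obtain ⟨f, hf, hf0⟩ := Submodule.exists_mem_ne_zero_of_ne_bot hE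
    exact ⟨f, hf, hf0, fun y => (hall y).imp fun c hc => hc f hf⟩
  · push Not at hall
    obtain ⟨y, hy⟩ := hall
    let R : E →ₗ[ℂ] E := (trC y).restrict (hinv y)
    have : Nontrivial E := Submodule.nontrivial_iff_ne_bot.2 hE
    obtain ⟨c, hc⟩ := Module.End.exists_eigenvalue R
    let E' : Submodule ℂ C(G, ℂ) := (Module.End.eigenspace R c).map E.subtype
    have hmem : ∀ f, f ∈ E' ↔ f ∈ E ∧ trC y f = c • f := by
      intro f
      simp only [E', Submodule.mem_map, Module.End.mem_eigenspace_iff]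
      constructor
      · rintro ⟨g, hg, rfl⟩
        exact ⟨g.2, congrArg Subtype.val hg⟩
      · rintro ⟨h1, h2⟩
        exact ⟨⟨f, h1⟩, Subtype.ext h2, rfl⟩
    have hle : E' ≤ E := fun f hf => ((hmem f).1 hf).1
    obtain ⟨f0, hf0, hf0'⟩ := hy c
    have hlt : E' < E := lt_of_le_of_ne hle (fun he => hf0' ((hmem f0).1 (he ▸ hf0)).2)
    have hne : E' ≠ ⊥ := by
      obtain ⟨g, hg⟩ := hc.exists_hasEigenvector
      intro hb
      have : (g : C(G, ℂ)) ∈ E' := (hmem _).2 ⟨g.2, congrArg Subtype.val hg.apply_eq_smul⟩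
      rw [hb, Submodule.mem_bot] at this
      exact hg.2 (Subtype.ext this)
    have : FiniteDimensional ℂ E' := Submodule.finiteDimensional_of_le hle
    obtain ⟨f, hf, h0, h1⟩ := ih _ (h ▸ Submodule.finrank_lt_finrank_of_lt hlt) E' hne (by
      intro z f hf
      rw [hmem] at hf ⊢
      refine ⟨hinv z f hf.1, ?_⟩
      have : trC y (trC z f) = trC z (trC y f) := by
        ext x; simp [trC_apply, add_right_comm]
      rw [this, hf.2, map_smul]) rfl
    exact ⟨f, hle hf, h0, h1⟩

/-- a continuous character -/
def IsCh (χ : C(G, ℂ)) : Prop := χ 0 = 1 ∧ ∀ x y, χ (x + y) = χ x * χ y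

theorem IsCh.norm_eq {χ : C(G, ℂ)} (h : IsCh χ) (x : G) : ‖χ x‖ = 1 := by
  have hle : ∀ x, ‖χ x‖ ≤ 1 := by
    intro x
    by_contra! hx
    have hp : ∀ n : ℕ, χ (n • x) = χ x ^ n := by
      intro n
      induction n with
      | zero => simp [h.1]
      | succ n ih => rw [succ_nsmul, h.2, ih, pow_succ]
    obtain ⟨n, hn⟩ := pow_unbounded_of_one_lt ‖χ‖ hx
    have := χ.norm_coe_le_norm (n • x)
    rw [hp, norm_pow] at this
    linarith
  have h1 : χ x * χ (-x) = 1 := by rw [← h.2, add_neg_cancel, h.1]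
  have h2 := congrArg norm h1
  rw [norm_mul, norm_one] at h2
  nlinarith [hle x, hle (-x), norm_nonneg (χ x), norm_nonneg (χ (-x))]

end PW

open MeasureTheory Filter Topology TopologicalSpace
open scoped ENNReal Pointwise

section PW2
variable {G : Type*} [NormedAddCommGroup G] [CompactSpace G]

theorem exists_char (x0 : G) (hx0 : x0 ≠ 0) : ∃ χ : C(G, ℂ), IsCh χ ∧ χ x0 ≠ 1 := by
  letI : MeasurableSpace G := borel G
  haveI : BorelSpace G := ⟨rfl⟩
  haveI : SecondCountableTopology G := inferInstance
  let ν : Measure G := Measure.addHaar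
  haveI : IsFiniteMeasure ν := inferInstance
  let k : G → ℝ := fun z => ‖z + x0‖ + ‖z - x0‖ - 2 * ‖z‖
  have hk : Continuous k := by fun_prop
  have hkneg : ∀ z, k (-z) = k z := by
    intro z
    simp only [k]
    rw [show -z + x0 = -(z - x0) by abel, show -z - x0 = -(z + x0) by abel]
    simp only [norm_neg]
    ring
  let J : C(G, ℂ) →L[ℂ] Lp ℂ 2 ν := ContinuousMap.toLp 2 ν ℂ
  have hJinj : Function.Injective J := ContinuousMap.toLp_injective (E := ℂ) (p := 2) (𝕜 := ℂ) ν
  have hJdense : DenseRange J := ContinuousMap.toLp_denseRange ℂ ν ℂ (by norm_num)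
  let K0 : C(G, C(G, ℂ)) := ContinuousMap.curry ⟨fun p : G × G => ((k (p.1 - p.2) : ℝ) : ℂ), by fun_prop⟩
  have hK0 : ∀ x y, K0 x y = (k (x - y) : ℂ) := fun _ _ => rfl
  let K : C(G, Lp ℂ 2 ν) := ⟨fun x => J (K0 x), by fun_prop⟩
  have hinner : ∀ f g : C(G, ℂ), inner ℂ (J f) (J g) = ∫ y, g y * (starRingEnd ℂ) (f y) ∂ν := by
    intro f g
    exact ContinuousMap.inner_toLp (𝕜 := ℂ) ν f g
  let T0 := kerOp K
  have hT0 : ∀ f x, T0 (J f) x = ∫ y, (k (x - y) : ℂ) * f y ∂ν := by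
    intro f x
    change inner ℂ (J (K0 x)) (J f) = _
    rw [hinner]
    congr 1 with y
    rw [hK0, Complex.conj_ofReal, mul_comm]
  let T : Lp ℂ 2 ν →L[ℂ] Lp ℂ 2 ν := J.comp T0
  have hTc : IsCompactOperator T := (kerOp_compact K).clm_comp J
  have hTs : T.IsSymmetric := by
    intro a b
    refine hJdense.induction_on₂ (p := fun a b => inner ℂ (T a) b = inner ℂ a (T b)) ?_ ?_ a b
    · exact isClosed_eq (by fun_prop) (by fun_prop)
    · intro f g
      change inner ℂ (J (T0 (J f))) (J g) = inner ℂ (J f) (J (T0 (J g)))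
      rw [hinner, hinner]
      simp only [hT0]
      simp_rw [← integral_conj, ← integral_const_mul, ← integral_mul_const]
      rw [integral_integral_swap_of_hasCompactSupport]
      · congr 1 with x
        congr 1 with y
        have : k (y - x) = k (x - y) := by rw [← hkneg, neg_sub]
        simp only [map_mul, Complex.conj_ofReal, this]
        ring
      · have := hk
        fun_prop
      · exact HasCompactSupport.of_compactSpace _
  have hT0ne : T ≠ 0 := by
    intro h
    have h1 : T (K 0) = 0 := by rw [h]; rfl
    have h2 : T0 (K 0) = 0 := hJinj (h1.trans (map_zero J).symm)
    have h3 : inner ℂ (K 0) (K 0) = (0:ℂ) := by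
      have := congrArg (fun f : C(G, ℂ) => f 0) h2
      exact this
    rw [inner_self_eq_zero] at h3
    have h4 : K0 0 = 0 := hJinj (h3.trans (map_zero J).symm)
    have h5 := hK0 0 0
    rw [h4] at h5
    have h6 : k 0 = 0 := by
      simpa using h5.symm
    simp [k] at h6
    exact hx0 h6
  have hev : ∃ m : ℂ, Module.End.HasEigenvalue (T : Module.End ℂ (Lp ℂ 2 ν)) m ∧ m ≠ 0 := by
    by_contra! h
    exact hT0ne ((ContinuousLinearMap.eq_zero_of_forall_hasEigenvalue_eq_zero hTc hTs).1 h)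
  obtain ⟨m, hm, hm0⟩ := hev
  obtain ⟨φ, hφ⟩ := hm.exists_hasEigenvector
  have hφe : J (T0 φ) = m • φ := hφ.apply_eq_smul
  let S : C(G, ℂ) →L[ℂ] C(G, ℂ) := T0.comp J
  have hSc : IsCompactOperator S := (kerOp_compact K).comp_clm J
  have hS : ∀ f x, S f x = ∫ y, (k (x - y) : ℂ) * f y ∂ν := hT0
  let E := Module.End.eigenspace S.toLinearMap m
  have hE : ∀ f, f ∈ E ↔ S f = m • f := fun f => Module.End.mem_eigenspace_iff
  haveI : FiniteDimensional ℂ E := by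
    have hT := hSc.restrict'
      ((Module.End.mem_invtSubmodule_iff_forall_mem_of_mem _).mp (Module.End.eigenspace_mem_invtSubmodule S.toLinearMap m))
    rw [Module.End.restrict_eigenspace, LinearMap.coe_smul, IsCompactOperator.smul_iff₀ hm0] at hT
    exact isCompactOperator_id_iff_finiteDimensional.1 hT
  have hEne : E ≠ ⊥ := by
    rw [Submodule.ne_bot_iff]
    refine ⟨T0 φ, ?_, ?_⟩
    · rw [hE]
      change T0 (J (T0 φ)) = _
      rw [hφe, map_smul]
    · intro h
      rw [h, map_zero] at hφe
      exact (smul_ne_zero hm0 hφ.2) hφe.symm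
  have hStr : ∀ y f, S (trC y f) = trC y (S f) := by
    intro y f
    ext x
    rw [hS, trC_apply, hS, ← integral_add_right_eq_self (fun z => (k (x + y - z) : ℂ) * f z) y]
    congr 1 with z
    rw [trC_apply, add_sub_add_right_eq_sub]
  obtain ⟨f, hfE, hf0, hfc⟩ := exists_joint E hEne (by
    intro y f hf
    rw [hE] at hf ⊢
    rw [hStr, hf, map_smul])
  choose c hc using hfc
  have hfc : ∀ x y, f (x + y) = c y * f x := fun x y => congrArg (fun f : C(G, ℂ) => f x) (hc y)
  have hf00 : f 0 ≠ 0 := by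
    intro h
    apply hf0
    ext y
    have := hfc 0 y
    rw [zero_add, h, mul_zero] at this
    exact this
  have hcy : ∀ y, c y = f y / f 0 := by
    intro y
    have := hfc 0 y
    rw [zero_add] at this
    rw [this]; field_simp
  refine ⟨⟨fun x => f x / f 0, by fun_prop⟩, ⟨?_, ?_⟩, ?_⟩
  · simp [hf00]
  · intro x y
    simp only [ContinuousMap.coe_mk]
    rw [hfc, hcy]; ring
  · intro h
    have hcx : c x0 = 1 := by rw [hcy]; exact h
    have hp : ∀ x, f (x + x0) = f x := fun x => by rw [hfc, hcx, one_mul]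
    have hp' : ∀ x, f (x - x0) = f x := fun x => by rw [← hp, sub_add_cancel]
    apply hf0
    have hSf : S f = m • f := (hE f).1 hfE
    have hz : S f = 0 := by
      ext x
      rw [hS]
      let p : G → G → ℂ := fun a y => ((‖x - y + a‖ : ℝ) : ℂ) * f y
      have hItg : ∀ a, Integrable (p a) ν := fun a =>
        Continuous.integrable_of_hasCompactSupport (by fun_prop) (HasCompactSupport.of_compactSpace _)
      have hp1 : ∫ y, p x0 y ∂ν = ∫ y, p 0 y ∂ν := by
        rw [← integral_add_right_eq_self _ x0]
        congr 1 with y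
        simp only [p, hp]
        rw [show x - (y + x0) + x0 = x - y + 0 by abel]
      have hp2 : ∫ y, p (-x0) y ∂ν = ∫ y, p 0 y ∂ν := by
        rw [← integral_sub_right_eq_self _ x0]
        congr 1 with y
        simp only [p, hp']
        rw [show x - (y - x0) + -x0 = x - y + 0 by abel]
      have : (fun y => (k (x - y) : ℂ) * f y) = fun y => p x0 y + p (-x0) y - 2 * p 0 y := by
        ext y
        simp only [k, p, sub_eq_add_neg, add_zero]
        push_cast
        ring
      have h12 : Integrable (fun y => p x0 y + p (-x0) y) ν := (hItg _).add (hItg _)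
      rw [this, integral_sub h12 ((hItg 0).const_mul 2), integral_add (hItg _) (hItg _),
        integral_const_mul, hp1, hp2]
      simp
      ring
    rw [hz] at hSf
    exact (smul_eq_zero.1 hSf.symm).resolve_left hm0

end PW2

open MeasureTheory Filter Topology TopologicalSpace
open scoped ENNReal Pointwise

section PC1

theorem IsCh.mem_of_sep {G : Type*} [NormedAddCommGroup G] [CompactSpace G]
    (A : Set C(G, ℂ)) (hA : ∀ χ ∈ A, IsCh χ) (h1 : 1 ∈ A)
    (hmul : ∀ χ ∈ A, ∀ ψ ∈ A, χ * ψ ∈ A) (hstar : ∀ χ ∈ A, star χ ∈ A)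
    (hsep : ∀ z : G, z ≠ 0 → ∃ χ ∈ A, χ z ≠ 1) (χ0 : C(G, ℂ)) (hχ0 : IsCh χ0) : χ0 ∈ A := by
  by_contra hn
  letI : MeasurableSpace G := borel G
  haveI : BorelSpace G := ⟨rfl⟩
  let ν : Measure G := Measure.addHaar
  have hItg : ∀ f : C(G, ℂ), Integrable f ν := fun f =>
    Continuous.integrable_of_hasCompactSupport (by fun_prop) (HasCompactSupport.of_compactSpace _)
  have hcc : ∀ x, χ0 x * (star χ0) x = 1 := by
    intro x
    have := hχ0.norm_eq x
    rw [ContinuousMap.star_apply, Complex.star_def, Complex.mul_conj, Complex.normSq_eq_norm_sq, this]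
    simp
  let L : C(G, ℂ) →ₗ[ℂ] ℂ :=
    { toFun := fun f => ∫ x, (f * star χ0) x ∂ν
      map_add' := by
        intro f g
        rw [add_mul, ← integral_add (hItg _) (hItg _)]
        rfl
      map_smul' := by
        intro c f
        rw [smul_mul_assoc, RingHom.id_apply, smul_eq_mul, ← integral_const_mul]
        rfl }
  have hLapp : ∀ f, L f = ∫ x, (f * star χ0) x ∂ν := fun f => rfl
  have hLc : Continuous L := by
    refine AddMonoidHomClass.continuous_of_bound L (ν.real Set.univ) ?_
    intro f
    rw [hLapp]
    have := norm_integral_le_of_norm_le_const (μ := ν) (f := fun x => (f * star χ0) x) (C := ‖f‖)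
      (Eventually.of_forall (fun x => by
        rw [ContinuousMap.mul_apply, norm_mul, ContinuousMap.star_apply, norm_star, hχ0.norm_eq, mul_one]
        exact f.norm_coe_le_norm x))
    rw [mul_comm (ν.real Set.univ)]; exact this
  have hLA : ∀ χ ∈ A, L χ = 0 := by
    intro χ hχ
    have hc := hA χ hχ
    have hψ : ∀ x y, (χ * star χ0) (x + y) = (χ * star χ0) x * (χ * star χ0) y := by
      intro x y
      simp only [ContinuousMap.mul_apply, ContinuousMap.star_apply, hc.2, hχ0.2, star_mul]
      ring
    obtain ⟨y, hy⟩ : ∃ y, (χ * star χ0) y ≠ 1 := by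
      by_contra! hall
      apply hn
      have : χ = χ0 := by
        ext x
        have h := hall x
        rw [ContinuousMap.mul_apply] at h
        calc χ x = χ x * (χ0 x * (star χ0) x) := by rw [hcc, mul_one]
          _ = (χ x * (star χ0) x) * χ0 x := by ring
          _ = _ := by rw [h, one_mul]
      rw [← this]; exact hχ
    have e : L χ = L χ * (χ * star χ0) y := by
      rw [hLapp]
      conv_lhs => rw [← integral_add_right_eq_self (fun x => (χ * star χ0) x) y]
      rw [← integral_mul_const]
      congr 1 with x
      exact hψ x y
    have : L χ * ((χ * star χ0) y - 1) = 0 := by rw [mul_sub, ← e]; ring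
    exact (mul_eq_zero.1 this).resolve_right (sub_ne_zero.2 hy)
  let M : Submonoid C(G, ℂ) := { carrier := A, mul_mem' := fun ha hb => hmul _ ha _ hb, one_mem' := h1 }
  let S := StarAlgebra.adjoin ℂ A
  have hsA : A ∪ star A = A := by
    rw [Set.union_eq_left]
    intro χ h
    rw [← star_star χ]
    exact hstar _ h
  have hS : ∀ f ∈ S, L f = 0 := by
    intro f hf
    have h2 : f ∈ (Algebra.adjoin ℂ A).toSubmodule := by
      have : S.toSubalgebra = Algebra.adjoin ℂ A := by
        rw [StarAlgebra.adjoin_toSubalgebra, hsA]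
      rw [← this]; exact hf
    rw [Algebra.adjoin_eq_span] at h2
    have h3 : Submonoid.closure A = M := by
      have : (M : Set C(G, ℂ)) = A := rfl
      rw [← this, Submonoid.closure_eq]
    rw [h3] at h2
    have h4 : Submodule.span ℂ (M : Set C(G, ℂ)) ≤ LinearMap.ker L := by
      rw [Submodule.span_le]
      intro χ hχ
      exact hLA χ hχ
    exact h4 h2
  have htop := ContinuousMap.starSubalgebra_topologicalClosure_eq_top_of_separatesPoints S (by
    intro x y hxy
    obtain ⟨χ, hχ, hz⟩ := hsep (x - y) (sub_ne_zero.2 hxy)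
    refine ⟨χ, ⟨χ, StarAlgebra.subset_adjoin ℂ A hχ, rfl⟩, ?_⟩
    intro h
    apply hz
    have h5 := (hA χ hχ).2 (x - y) y
    rw [sub_add_cancel, h] at h5
    have h6 : χ y ≠ 0 := by
      rw [← norm_ne_zero_iff, (hA χ hχ).norm_eq]; norm_num
    field_simp at h5
    exact h5.symm)
  have hcl : χ0 ∈ closure (S : Set C(G, ℂ)) := by
    have : χ0 ∈ S.topologicalClosure := by rw [htop]; trivial
    exact this
  have hL0 : L χ0 = 0 := by
    have : closure (S : Set C(G, ℂ)) ⊆ L ⁻¹' {0} :=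
      closure_minimal (fun f hf => hS f hf) (isClosed_singleton.preimage hLc)
    exact this hcl
  rw [hLapp] at hL0
  have : (fun x => (χ0 * star χ0) x) = fun _ => (1:ℂ) := by
    ext x; exact hcc x
  rw [this] at hL0
  simp at hL0
  have h7 : ν Set.univ ≠ 0 := (isOpen_univ.measure_pos ν ⟨0, trivial⟩).ne'
  rw [measureReal_def, ENNReal.toReal_eq_zero_iff] at hL0
  rcases hL0 with h | h
  · exact h7 h
  · exact measure_ne_top ν _ h

theorem exists_exp_of_hom (f : ℝ → ℂ) (hf : Continuous f) (h0 : f 0 = 1)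
    (hadd : ∀ x y, f (x + y) = f x * f y) (hn : ∀ x, ‖f x‖ = 1) :
    ∃ lam : ℝ, ∀ t, f t = Complex.exp (Complex.I * ((lam * t : ℝ) : ℂ)) := by
  let F : ℝ → ℂ := fun x => ∫ s in (0:ℝ)..x, f s
  have hF : ∀ x, HasDerivAt F (f x) x := fun x =>
    intervalIntegral.integral_hasDerivAt_right (hf.intervalIntegrable _ _)
      (hf.stronglyMeasurableAtFilter _ _) hf.continuousAt
  obtain ⟨δ, hδ⟩ : ∃ δ, F δ ≠ 0 := by
    by_contra! h
    have h1 : F = fun _ => 0 := funext h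
    have h2 := hF 0
    rw [h1] at h2
    have := h2.unique (hasDerivAt_const (0:ℝ) (0:ℂ))
    rw [h0] at this
    exact one_ne_zero this
  have hfx : ∀ x, f x = (F (x + δ) - F x) / F δ := by
    intro x
    have : F (x + δ) - F x = f x * F δ := by
      simp only [F]
      rw [intervalIntegral.integral_interval_sub_left (hf.intervalIntegrable _ _) (hf.intervalIntegrable _ _),
        ← intervalIntegral.integral_const_mul]
      simp_rw [← hadd]
      rw [intervalIntegral.integral_comp_add_left]
      simp
    rw [this]; field_simp
  let a : ℂ := (f δ - 1) / F δ
  have hd : ∀ x, HasDerivAt f (a * f x) x := by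
    intro x
    have h1 : HasDerivAt (fun x => (F (x + δ) - F x) / F δ) ((f (x + δ) - f x) / F δ) x :=
      (((hF (x + δ)).comp_add_const x δ).sub (hF x)).div_const _
    have h2 : (fun x => (F (x + δ) - F x) / F δ) = f := funext fun x => (hfx x).symm
    rw [h2] at h1
    convert h1 using 1
    rw [hadd]
    simp only [a]
    ring
  have hexp : ∀ t, f t = Complex.exp (a * t) := by
    have hg : ∀ t : ℝ, HasDerivAt (fun t : ℝ => f t * Complex.exp (-(a * t))) 0 t := by
      intro t
      have h1 : HasDerivAt (fun t : ℝ => -(a * (t:ℂ))) (-(a * 1)) t :=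
        ((Complex.ofRealCLM.hasDerivAt (x := t)).const_mul a).neg
      have h2 := (hd t).mul h1.cexp
      have h3 : a * f t * Complex.exp (-(a * ↑t)) + f t * (Complex.exp (-(a * ↑t)) * -(a * 1)) = 0 := by ring
      rw [h3] at h2
      exact h2
    intro t
    have hc : (fun t : ℝ => f t * Complex.exp (-(a * t))) t = (fun t : ℝ => f t * Complex.exp (-(a * t))) 0 :=
      is_const_of_deriv_eq_zero (fun x => (hg x).differentiableAt) (fun x => (hg x).deriv) t 0
    simp only [h0] at hc
    rw [Complex.exp_neg] at hc
    field_simp at hc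
    simpa using hc
  have hre : a.re = 0 := by
    have h1 := hn 1
    rw [hexp, Complex.norm_exp] at h1
    simpa using h1
  refine ⟨a.im, fun t => ?_⟩
  rw [hexp]
  congr 1
  apply Complex.ext
  · simp [hre]
  · simp [hre]

theorem exp_inj_of_forall (a b : ℝ)
    (h : ∀ t : ℝ, Complex.exp (Complex.I * ((a * t : ℝ) : ℂ)) = Complex.exp (Complex.I * ((b * t : ℝ) : ℂ))) :
    a = b := by
  have hd : ∀ c : ℝ, HasDerivAt (fun t : ℝ => Complex.exp (Complex.I * ((c * t : ℝ) : ℂ))) (Complex.I * c) 0 := by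
    intro c
    have h1 : HasDerivAt (fun t : ℝ => Complex.I * ((c * t : ℝ) : ℂ)) (Complex.I * c) 0 := by
      have := ((Complex.ofRealCLM.hasDerivAt (x := (0:ℝ))).const_mul (Complex.I * c))
      simpa [mul_assoc] using this
    simpa using h1.cexp
  have h1 := hd a
  rw [funext h] at h1
  have h2 := h1.unique (hd b)
  have h3 := mul_left_cancel₀ Complex.I_ne_zero h2
  exact_mod_cast h3

end PC1

open MeasureTheory Filter Topology TopologicalSpace
open scoped ENNReal Pointwise

section PC2

/-- the real line with the topology given by a group seminorm -/
def RN (_N : AddGroupSeminorm ℝ) : Type := ℝ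

noncomputable instance (N : AddGroupSeminorm ℝ) : AddCommGroup (RN N) := inferInstanceAs (AddCommGroup ℝ)

noncomputable instance (N : AddGroupSeminorm ℝ) : SeminormedAddCommGroup (RN N) :=
  AddGroupSeminorm.toSeminormedAddCommGroup (E := RN N) N

/-- identity map -/
def toRN (N : AddGroupSeminorm ℝ) : ℝ →+ RN N := AddMonoidHom.id ℝ

theorem toRN_surj (N : AddGroupSeminorm ℝ) (x : RN N) : ∃ t : ℝ, toRN N t = x := ⟨x, rfl⟩

theorem norm_toRN (N : AddGroupSeminorm ℝ) (t : ℝ) : ‖toRN N t‖ = N t := rfl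

/-- the exponential -/
noncomputable def ex (lam t : ℝ) : ℂ := Complex.exp (Complex.I * ((lam * t : ℝ) : ℂ))

theorem ex_add (lam s t : ℝ) : ex lam (s + t) = ex lam s * ex lam t := by
  rw [ex, ex, ex, ← Complex.exp_add]; congr 1; push_cast; ring

theorem ex_add' (a b t : ℝ) : ex (a + b) t = ex a t * ex b t := by
  rw [ex, ex, ex, ← Complex.exp_add]; congr 1; push_cast; ring

theorem ex_zero (lam : ℝ) : ex lam 0 = 1 := by simp [ex]

theorem ex_zero' (t : ℝ) : ex 0 t = 1 := by simp [ex]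

theorem norm_ex (lam t : ℝ) : ‖ex lam t‖ = 1 := by
  rw [ex, Complex.norm_exp]; simp

theorem ex_neg (lam t : ℝ) : ex (-lam) t = star (ex lam t) := by
  rw [ex, ex, Complex.star_def, ← Complex.exp_conj]
  simp

/-- The module of a seminorm. -/
def SMod (N : AddGroupSeminorm ℝ) : AddSubgroup ℝ where
  carrier := {lam | ∀ τ : ℕ → ℝ, Tendsto (fun j => N (τ j)) atTop (𝓝 0) →
    Tendsto (fun j => ex lam (τ j)) atTop (𝓝 1)}
  add_mem' := by
    intro a b ha hb τ h
    have := (ha τ h).mul (hb τ h)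
    simpa [ex_add'] using this
  zero_mem' := by
    intro τ h
    simp [ex_zero']
  neg_mem' := by
    intro a ha τ h
    have := (ha τ h).star
    simpa [ex_neg] using this

theorem tendsto_RN_zero (N : AddGroupSeminorm ℝ) (τ : ℕ → ℝ) :
    Tendsto (fun j => toRN N (τ j)) atTop (𝓝 0) ↔ Tendsto (fun j => N (τ j)) atTop (𝓝 0) := by
  rw [tendsto_zero_iff_norm_tendsto_zero]; rfl

theorem compact_RN (N : AddGroupSeminorm ℝ)
    (htb : ∀ ε > 0, ∃ A : Set ℝ, A.Finite ∧ ∀ s, ∃ a ∈ A, N (s - a) < ε) :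
    CompactSpace (UniformSpace.Completion (RN N)) := by
  have h1 : TotallyBounded (Set.univ : Set (RN N)) := by
    rw [Metric.totallyBounded_iff]
    intro ε hε
    obtain ⟨A, hA, h⟩ := htb ε hε
    refine ⟨toRN N '' A, hA.image _, ?_⟩
    intro s _
    obtain ⟨t, rfl⟩ := toRN_surj N s
    obtain ⟨a, ha, hlt⟩ := h t
    simp only [Set.mem_iUnion]
    refine ⟨toRN N a, ⟨a, ha, rfl⟩, ?_⟩
    rw [Metric.mem_ball, dist_eq_norm, ← map_sub]
    exact hlt
  have h2 := (h1.image (UniformSpace.Completion.uniformContinuous_coe (RN N))).closure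
  rw [Set.image_univ, UniformSpace.Completion.denseRange_coe.closure_range] at h2
  exact ⟨isCompact_iff_totallyBounded_isComplete.2 ⟨h2, isClosed_univ.isComplete⟩⟩

theorem exists_ext_char (N : AddGroupSeminorm ℝ) (lam : ℝ) (hl : lam ∈ SMod N) :
    ∃ χ : C(UniformSpace.Completion (RN N), ℂ), IsCh χ ∧
      ∀ t : ℝ, χ ((toRN N t : RN N) : UniformSpace.Completion (RN N)) = ex lam t := by
  let e : RN N → ℂ := fun t => ex lam t
  have he0 : Tendsto e (𝓝 0) (𝓝 1) := by
    apply tendsto_of_seq_tendsto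
    intro x hx
    exact hl x ((tendsto_RN_zero N x).1 hx)
  have he : UniformContinuous e := by
    rw [Metric.uniformContinuous_iff]
    intro ε hε
    have := Metric.tendsto_nhds_nhds.1 he0 ε hε
    obtain ⟨δ, hδ, h⟩ := this
    refine ⟨δ, hδ, ?_⟩
    intro a b hab
    have h2 := @h (a - b) (by rw [dist_zero_right, ← dist_eq_norm]; exact hab)
    have h3 : e a = e (a - b) * e b := by
      refine Eq.trans ?_ (ex_add lam (a - b : RN N) b)
      exact congrArg e (sub_add_cancel a b).symm
    rw [dist_eq_norm, h3, show e (a - b) * e b - e b = (e (a - b) - 1) * e b by ring, norm_mul,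
      show ‖e b‖ = 1 from norm_ex _ _, mul_one, ← dist_eq_norm]
    exact h2
  have hc : Continuous (UniformSpace.Completion.extension e) := UniformSpace.Completion.continuous_extension
  have hcoe : ∀ a : RN N, UniformSpace.Completion.extension e a = e a :=
    fun a => UniformSpace.Completion.extension_coe he a
  refine ⟨⟨UniformSpace.Completion.extension e, hc⟩, ⟨?_, ?_⟩, ?_⟩
  · have := hcoe 0
    rw [UniformSpace.Completion.coe_zero] at this
    exact this.trans (ex_zero lam)
  · intro x y
    refine UniformSpace.Completion.induction_on₂ x y (isClosed_eq (by fun_prop) (by fun_prop)) ?_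
    intro a b
    simp only [ContinuousMap.coe_mk]
    rw [← UniformSpace.Completion.coe_add, hcoe, hcoe, hcoe]
    exact ex_add lam a b
  · intro t
    exact hcoe _

theorem abstract_mod {ι : Type*} (N : AddGroupSeminorm ℝ) (M : ι → AddGroupSeminorm ℝ)
    (htb : ∀ ε > 0, ∃ A : Set ℝ, A.Finite ∧ ∀ s, ∃ a ∈ A, N (s - a) < ε)
    (hMc : ∀ i, Tendsto (M i) (𝓝 0) (𝓝 0))
    (h1 : ∀ i (τ : ℕ → ℝ), Tendsto (fun j => N (τ j)) atTop (𝓝 0) → Tendsto (fun j => M i (τ j)) atTop (𝓝 0))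
    (h2 : ∀ τ : ℕ → ℝ, (∀ i, Tendsto (fun j => M i (τ j)) atTop (𝓝 0)) → Tendsto (fun j => N (τ j)) atTop (𝓝 0)) :
    SMod N = AddSubgroup.closure (⋃ i, (SMod (M i) : Set ℝ)) := by
  apply le_antisymm
  swap
  · rw [AddSubgroup.closure_le, Set.iUnion_subset_iff]
    intro i lam hl τ hτ
    exact hl τ (h1 i τ hτ)
  set Γ := AddSubgroup.closure (⋃ i, (SMod (M i) : Set ℝ)) with hΓ
  intro lam hl
  haveI := compact_RN N htb
  let Ω := UniformSpace.Completion (RN N)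
  let jj : ℝ → Ω := fun t => ((toRN N t : RN N) : Ω)
  obtain ⟨χ0, hχ0, hχ0'⟩ := exists_ext_char N lam hl
  let A : Set C(Ω, ℂ) := {χ | IsCh χ ∧ ∃ l' ∈ Γ, ∀ t : ℝ, χ (jj t) = ex l' t}
  have key : χ0 ∈ A := by
    refine IsCh.mem_of_sep A (fun χ h => h.1) ?_ ?_ ?_ ?_ χ0 hχ0
    · exact ⟨⟨by simp, by simp⟩, 0, zero_mem _, by simp [ex_zero']⟩
    · rintro χ ⟨hc, a, ha, ha'⟩ ψ ⟨hc', b, hb, hb'⟩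
      refine ⟨⟨?_, ?_⟩, a + b, add_mem ha hb, ?_⟩
      · simp [hc.1, hc'.1]
      · intro x y
        simp only [ContinuousMap.mul_apply, hc.2, hc'.2]; ring
      · intro t
        simp only [ContinuousMap.mul_apply, ha', hb', ex_add']
    · rintro χ ⟨hc, a, ha, ha'⟩
      refine ⟨⟨?_, ?_⟩, -a, neg_mem ha, ?_⟩
      · simp [hc.1]
      · intro x y
        simp only [ContinuousMap.star_apply, hc.2, star_mul']
      · intro t
        simp only [ContinuousMap.star_apply, ha', ex_neg]
    · intro z hz
      let idh : ∀ i, RN N →+ RN (M i) := fun i => AddMonoidHom.id ℝ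
      have hid : ∀ i, Continuous (idh i) := by
        intro i
        apply continuous_of_continuousAt_zero
        change Tendsto _ _ _
        rw [map_zero]
        apply tendsto_of_seq_tendsto
        intro x hx
        exact (tendsto_RN_zero (M i) x).2 (h1 i x ((tendsto_RN_zero N x).1 hx))
      let Φ : ∀ i, Ω →+ UniformSpace.Completion (RN (M i)) := fun i => (idh i).completion (hid i)
      have hΦ : ∀ i, Continuous (Φ i) := fun i => AddMonoidHom.continuous_completion _ _
      have hΦc : ∀ i t, Φ i (jj t) = ((toRN (M i) t : RN (M i)) : UniformSpace.Completion (RN (M i))) :=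
        fun i t => AddMonoidHom.completion_coe _ (hid i) _
      obtain ⟨i, hi⟩ : ∃ i, Φ i z ≠ 0 := by
        by_contra! hall
        apply hz
        have hd : z ∈ closure (Set.range ((↑) : RN N → Ω)) := by
          rw [UniformSpace.Completion.denseRange_coe.closure_range]; trivial
        rw [mem_closure_iff_seq_limit] at hd
        obtain ⟨u, hu, hut⟩ := hd
        choose τ hτ using hu
        have e1 : Tendsto (fun j => N (τ j)) atTop (𝓝 0) := by
          apply h2
          intro i
          have h3 := ((hΦ i).tendsto z).comp hut
          rw [hall i] at h3
          have h4 := h3.norm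
          rw [norm_zero] at h4
          refine h4.congr ?_
          intro j
          have h5 := hΦc i (τ j)
          simp only [Function.comp]
          rw [← hτ j]
          change ‖Φ i (jj (τ j))‖ = _
          rw [h5, UniformSpace.Completion.norm_coe]
          rfl
        have e2 := hut.norm
        have e3 : (fun j => ‖u j‖) = fun j => N (τ j) := by
          ext j
          rw [← hτ j, UniformSpace.Completion.norm_coe]
          rfl
        rw [e3] at e2
        exact norm_eq_zero.1 (tendsto_nhds_unique e2 e1)
      have hdr : DenseRange (Φ i) := by
        have h3 : DenseRange ((↑) : RN (M i) → UniformSpace.Completion (RN (M i))) :=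
          UniformSpace.Completion.denseRange_coe
        refine h3.mono ?_
        rintro _ ⟨t, rfl⟩
        exact ⟨jj t, hΦc i t⟩
      haveI : CompactSpace (UniformSpace.Completion (RN (M i))) := by
        have h4 := isCompact_range (hΦ i)
        have h5 : Set.range (Φ i) = Set.univ := by
          rw [← h4.isClosed.closure_eq, hdr.closure_range]
        rw [h5] at h4
        exact ⟨h4⟩
      obtain ⟨χ, hχ, hne⟩ := exists_char (Φ i z) hi
      have hjc : Continuous (fun t : ℝ => ((toRN (M i) t : RN (M i)) : UniformSpace.Completion (RN (M i)))) := by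
        refine (UniformSpace.Completion.continuous_coe _).comp ?_
        apply continuous_of_continuousAt_zero
        change Tendsto _ _ _
        rw [map_zero, tendsto_zero_iff_norm_tendsto_zero]
        exact hMc i
      have hpn : ∀ x, ‖χ x‖ = 1 := hχ.norm_eq
      obtain ⟨l', hl'⟩ := exists_exp_of_hom (fun t : ℝ => χ ((toRN (M i) t : RN (M i)) : UniformSpace.Completion (RN (M i))))
        (χ.continuous.comp hjc) (by rw [map_zero, UniformSpace.Completion.coe_zero]; exact hχ.1)
        (by intro x y; rw [map_add, UniformSpace.Completion.coe_add]; exact hχ.2 _ _) (fun x => hpn _)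
      refine ⟨χ.comp ⟨Φ i, hΦ i⟩, ⟨⟨?_, ?_⟩, l', ?_, ?_⟩, hne⟩
      · simp [hχ.1]
      · intro x y; simp [hχ.2]
      · apply AddSubgroup.subset_closure
        rw [Set.mem_iUnion]
        refine ⟨i, ?_⟩
        intro τ hτ
        have h6 : Tendsto (fun j => ((toRN (M i) (τ j) : RN (M i)) : UniformSpace.Completion (RN (M i)))) atTop (𝓝 0) := by
          have := ((UniformSpace.Completion.continuous_coe (RN (M i))).tendsto 0).comp ((tendsto_RN_zero (M i) τ).2 hτ)
          rw [UniformSpace.Completion.coe_zero] at this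
          exact this
        have h7 := (χ.continuous.tendsto 0).comp h6
        rw [hχ.1] at h7
        refine h7.congr ?_
        intro j
        exact hl' (τ j)
      · intro t
        simp only [ContinuousMap.comp_apply, ContinuousMap.coe_mk]
        rw [hΦc]
        exact hl' t
  obtain ⟨_, l', hl', hh⟩ := key
  have : lam = l' := exp_inj_of_forall lam l' (fun t => by
    have := (hχ0' t).symm.trans (hh t)
    exact this)
  rw [this]; exact hl'

end PC2

open MeasureTheory Filter Topology TopologicalSpace
open scoped ENNReal Pointwise

section PD1

/-- window average sup -/
noncomputable def UA (l : ℝ) (θ : ℝ → ℝ≥0∞) : ℝ≥0∞ :=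
  ⨆ ξ : ℝ, ENNReal.ofReal (1 / l) * ∫⁻ t in Set.Icc ξ (ξ + l), θ t

/-- upper Weyl mean -/
noncomputable def UD (θ : ℝ → ℝ≥0∞) : ℝ≥0∞ := limsup (fun l => UA l θ) atTop

theorem weylD_one {α : Type*} (d : α → α → ℝ) (l : ℝ) (f g : ℝ → α) :
    weylD d 1 l f g = UA l (fun t => ENNReal.ofReal (d (f t) (g t))) := by
  simp [weylD, UA]

theorem weylDinf_one {α : Type*} (d : α → α → ℝ) (f g : ℝ → α) :
    weylDinf d 1 f g = UD (fun t => ENNReal.ofReal (d (f t) (g t))) := by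
  simp only [weylDinf, UD, weylD_one]

theorem UA_mono {l : ℝ} {θ θ' : ℝ → ℝ≥0∞} (h : ∀ t, θ t ≤ θ' t) : UA l θ ≤ UA l θ' :=
  iSup_mono fun _ => mul_le_mul_right (lintegral_mono h) _

theorem UD_mono {θ θ' : ℝ → ℝ≥0∞} (h : ∀ t, θ t ≤ θ' t) : UD θ ≤ UD θ' :=
  limsup_le_limsup (Eventually.of_forall fun _ => UA_mono h)

theorem UA_add {l : ℝ} {θ θ' : ℝ → ℝ≥0∞} (h : AEMeasurable θ volume) :
    UA l (fun t => θ t + θ' t) ≤ UA l θ + UA l θ' := by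
  refine iSup_le fun ξ => ?_
  rw [lintegral_add_left' h.restrict, mul_add]
  exact add_le_add (le_iSup (fun ξ : ℝ => ENNReal.ofReal (1 / l) * ∫⁻ t in Set.Icc ξ (ξ + l), θ t) ξ)
    (le_iSup (fun ξ : ℝ => ENNReal.ofReal (1 / l) * ∫⁻ t in Set.Icc ξ (ξ + l), θ' t) ξ)

theorem ennreal_limsup_add {u v : ℝ → ℝ≥0∞} :
    limsup (fun l => u l + v l) atTop ≤ limsup u atTop + limsup v atTop := by
  refine ENNReal.le_of_forall_pos_le_add ?_
  intro ε hε hfin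
  have hA := (ENNReal.add_lt_top.1 hfin).1
  have hB := (ENNReal.add_lt_top.1 hfin).2
  have he : (0 : ℝ≥0∞) < ε / 2 := ENNReal.half_pos (by exact_mod_cast hε.ne')
  have h1 := eventually_lt_of_limsup_lt (ENNReal.lt_add_right hA.ne he.ne')
  have h2 := eventually_lt_of_limsup_lt (ENNReal.lt_add_right hB.ne he.ne')
  refine limsup_le_of_le (by isBoundedDefault) ?_
  filter_upwards [h1, h2] with l a b
  refine (add_le_add a.le b.le).trans (le_of_eq ?_)
  rw [add_add_add_comm, ENNReal.add_halves]

theorem UD_add {θ θ' : ℝ → ℝ≥0∞} (h : AEMeasurable θ volume) :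
    UD (fun t => θ t + θ' t) ≤ UD θ + UD θ' :=
  (limsup_le_limsup (Eventually.of_forall fun _ => UA_add h)).trans ennreal_limsup_add

theorem UA_const_mul {l : ℝ} (c : ℝ≥0∞) (hc : c ≠ ⊤) (θ : ℝ → ℝ≥0∞) :
    UA l (fun t => c * θ t) = c * UA l θ := by
  simp only [UA, lintegral_const_mul' _ _ hc, ENNReal.mul_iSup]
  congr 1 with ξ
  ring_nf

theorem UD_const_mul (c : ℝ≥0∞) (hc : c ≠ ⊤) (θ : ℝ → ℝ≥0∞) :
    UD (fun t => c * θ t) = c * UD θ := by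
  simp only [UD, UA_const_mul c hc]
  exact ENNReal.limsup_const_mul_of_ne_top hc

theorem UA_const {l : ℝ} (hl : 0 < l) (c : ℝ≥0∞) : UA l (fun _ => c) = c := by
  simp only [UA]
  have : ∀ ξ : ℝ, ENNReal.ofReal (1 / l) * ∫⁻ t in Set.Icc ξ (ξ + l), c = c := by
    intro ξ
    rw [lintegral_const, Measure.restrict_apply_univ, Real.volume_Icc, mul_comm c, ← mul_assoc,
      ← ENNReal.ofReal_mul (by positivity)]
    have : 1 / l * (ξ + l - ξ) = 1 := by field_simp; ring
    rw [this]; simp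
  rw [iSup_congr this, iSup_const]

theorem UD_const (c : ℝ≥0∞) : UD (fun _ => c) = c := by
  have : (fun l => UA l (fun _ => c)) =ᶠ[atTop] fun _ => c := by
    filter_upwards [eventually_gt_atTop 0] with l hl using UA_const hl c
  rw [UD, limsup_congr this, limsup_const]

theorem lint_shift (θ : ℝ → ℝ≥0∞) (s a b : ℝ) :
    ∫⁻ t in Set.Icc a b, θ (t + s) = ∫⁻ t in Set.Icc (a + s) (b + s), θ t := by
  have h := (measurePreserving_add_right (volume : Measure ℝ) s).setLIntegral_comp_preimage_emb
    (MeasurableEquiv.addRight s).measurableEmbedding θ (Set.Icc (a + s) (b + s))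
  rw [← h]
  congr 2
  ext t
  simp

theorem UA_shift (l : ℝ) (θ : ℝ → ℝ≥0∞) (s : ℝ) : UA l (fun t => θ (t + s)) = UA l θ := by
  simp only [UA, lint_shift]
  refine (Equiv.addRight s).iSup_congr ?_
  intro ξ
  simp only [Equiv.coe_addRight]
  rw [show ξ + l + s = ξ + s + l by ring]

theorem UD_shift (θ : ℝ → ℝ≥0∞) (s : ℝ) : UD (fun t => θ (t + s)) = UD θ := by
  simp only [UD, UA_shift]

theorem lint_tile {θ : ℝ → ℝ≥0∞} {l : ℝ} {c : ℝ≥0∞}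
    (h : ∀ ξ, ∫⁻ t in Set.Icc ξ (ξ + l), θ t ≤ c) (ξ : ℝ) (n : ℕ) :
    ∫⁻ t in Set.Icc ξ (ξ + n * l), θ t ≤ n * c := by
  induction n with
  | zero => simp
  | succ n ih =>
    have hs : Set.Icc ξ (ξ + (n + 1 : ℕ) * l) ⊆ Set.Icc ξ (ξ + n * l) ∪ Set.Icc (ξ + n * l) (ξ + n * l + l) := by
      intro t ht
      push_cast at ht
      rcases le_total t (ξ + n * l) with h1 | h1
      · exact Or.inl ⟨ht.1, h1⟩
      · exact Or.inr ⟨h1, by have := ht.2; linarith⟩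
    calc ∫⁻ t in Set.Icc ξ (ξ + (n + 1 : ℕ) * l), θ t
        ≤ ∫⁻ t in Set.Icc ξ (ξ + n * l) ∪ Set.Icc (ξ + n * l) (ξ + n * l + l), θ t :=
          lintegral_mono_set hs
      _ ≤ _ := lintegral_union_le _ _ _
      _ ≤ n * c + c := add_le_add ih (h _)
      _ = _ := by push_cast; ring

theorem UA_tile {θ : ℝ → ℝ≥0∞} {l : ℝ} (hl : 0 < l) {c : ℝ≥0∞}
    (h : ∀ ξ, ∫⁻ t in Set.Icc ξ (ξ + l), θ t ≤ ENNReal.ofReal l * c) {L : ℝ} (hL : l ≤ L) :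
    UA L θ ≤ 2 * c := by
  refine iSup_le fun ξ => ?_
  have hL0 : 0 < L := hl.trans_le hL
  let n := ⌈L / l⌉₊
  have h1 : L ≤ n * l := by
    have := Nat.le_ceil (L / l)
    rwa [div_le_iff₀ hl] at this
  have h2 : n * l ≤ 2 * L := by
    have := Nat.ceil_lt_add_one (show 0 ≤ L / l by positivity)
    have h3 : (n : ℝ) * l < (L / l + 1) * l := by
      apply mul_lt_mul_of_pos_right this hl
    have h4 : (L / l + 1) * l = L + l := by field_simp
    linarith
  calc ENNReal.ofReal (1 / L) * ∫⁻ t in Set.Icc ξ (ξ + L), θ t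
      ≤ ENNReal.ofReal (1 / L) * (n * (ENNReal.ofReal l * c)) := by
        gcongr
        refine le_trans (lintegral_mono_set ?_) (lint_tile h ξ n)
        exact Set.Icc_subset_Icc_right (by linarith)
    _ = ENNReal.ofReal (1 / L * (n * l)) * c := by
        rw [ENNReal.ofReal_mul (by positivity), ENNReal.ofReal_mul (by positivity), ENNReal.ofReal_natCast]
        ring
    _ ≤ ENNReal.ofReal 2 * c := by
        gcongr
        rw [div_mul_eq_mul_div, one_mul, div_le_iff₀ hL0]
        exact h2
    _ = _ := by simp

theorem UD_tile {θ : ℝ → ℝ≥0∞} {l : ℝ} (hl : 0 < l) {c : ℝ≥0∞}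
    (h : ∀ ξ, ∫⁻ t in Set.Icc ξ (ξ + l), θ t ≤ ENNReal.ofReal l * c) : UD θ ≤ 2 * c := by
  refine limsup_le_of_le (by isBoundedDefault) ?_
  filter_upwards [eventually_ge_atTop l] with L hL using UA_tile hl h hL

theorem lint_le_of_UA {θ : ℝ → ℝ≥0∞} {l : ℝ} (hl : 0 < l) {c : ℝ≥0∞} (h : UA l θ ≤ c) (ξ : ℝ) :
    ∫⁻ t in Set.Icc ξ (ξ + l), θ t ≤ ENNReal.ofReal l * c := by
  have h1 : ENNReal.ofReal (1 / l) * ∫⁻ t in Set.Icc ξ (ξ + l), θ t ≤ c :=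
    (le_iSup (fun ξ : ℝ => ENNReal.ofReal (1 / l) * ∫⁻ t in Set.Icc ξ (ξ + l), θ t) ξ).trans h
  calc ∫⁻ t in Set.Icc ξ (ξ + l), θ t
      = ENNReal.ofReal l * (ENNReal.ofReal (1 / l) * ∫⁻ t in Set.Icc ξ (ξ + l), θ t) := by
        rw [← mul_assoc, ← ENNReal.ofReal_mul hl.le, mul_one_div_cancel hl.ne']; simp
    _ ≤ _ := by gcongr

theorem UD_finset_sum {ι : Type*} (s : Finset ι) (θ : ι → ℝ → ℝ≥0∞) (h : ∀ i ∈ s, AEMeasurable (θ i) volume) :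
    UD (fun t => ∑ i ∈ s, θ i t) ≤ ∑ i ∈ s, UD (θ i) := by
  classical
  induction s using Finset.induction_on with
  | empty => simp [UD_const]
  | insert a s ha ih =>
    simp only [Finset.sum_insert ha]
    exact (UD_add (h a (Finset.mem_insert_self a s))).trans
      (add_le_add le_rfl (ih fun i hi => h i (Finset.mem_insert_of_mem hi)))

/-- the seminorm attached to a function -/
noncomputable def semiW {α : Type*} (d : α → α → ℝ) (f : ℝ → α)
    (h1 : ∀ x y, d x y ≤ 1) (h0 : ∀ x, d x x = 0) (hs : ∀ x y, d x y = d y x)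
    (ht : ∀ x y z, d x z ≤ d x y + d y z)
    (hm : ∀ τ, AEMeasurable (fun t => ENNReal.ofReal (d (f t) (f (t + τ)))) volume) :
    AddGroupSeminorm ℝ where
  toFun τ := (weylDinf d 1 f (fun t => f (t + τ))).toReal
  map_zero' := by
    simp [weylDinf_one, h0, UD_const]
  neg' τ := by
    congr 1
    rw [weylDinf_one, weylDinf_one, ← UD_shift _ τ]
    congr 1 with t
    rw [add_neg_cancel_right, hs]
  add_le' σ τ := by
    have hle : ∀ τ, weylDinf d 1 f (fun t => f (t + τ)) ≠ ⊤ := by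
      intro τ
      rw [weylDinf_one]
      refine ne_top_of_le_ne_top ENNReal.one_ne_top ((UD_mono (θ' := fun _ => 1) ?_).trans (UD_const 1).le)
      intro t
      exact ENNReal.ofReal_le_one.2 (h1 _ _)
    rw [← ENNReal.toReal_add (hle _) (hle _)]
    refine ENNReal.toReal_mono (ENNReal.add_ne_top.2 ⟨hle _, hle _⟩) ?_
    simp only [weylDinf_one]
    rw [← UD_shift (fun t => ENNReal.ofReal (d (f t) (f (t + τ)))) σ]
    refine le_trans (UD_mono ?_) (UD_add (hm σ))
    intro t
    have d0 : ∀ x y, 0 ≤ d x y := by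
      intro x y
      have := ht x y x
      rw [h0, hs y x] at this
      linarith
    rw [← ENNReal.ofReal_add (d0 _ _) (d0 _ _)]
    apply ENNReal.ofReal_le_ofReal
    rw [← add_assoc]
    exact ht _ _ _

end PD1

open MeasureTheory Filter Topology TopologicalSpace
open scoped ENNReal Pointwise

section PD2

variable {U : Type*} [MetricSpace U] [TopologicalSpace.SeparableSpace U] [MeasurableSpace U] [BorelSpace U]

theorem cont_lint (f : BoundedContinuousFunction U NNReal) :
    Continuous (fun P : ProbabilityMeasure U => ∫⁻ x, (f x : ℝ≥0∞) ∂(P : Measure U)) := by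
  rw [continuous_iff_continuousAt]
  intro P
  exact (ProbabilityMeasure.tendsto_iff_forall_lintegral_tendsto (μs := id).1 tendsto_id) f

theorem cont_int (f : BoundedContinuousFunction U ℝ) :
    Continuous (fun P : ProbabilityMeasure U => ∫ x, f x ∂(P : Measure U)) := by
  rw [continuous_iff_continuousAt]
  intro P
  exact (ProbabilityMeasure.tendsto_iff_forall_integral_tendsto (μs := id).1 tendsto_id) f

theorem cont_lpDist : Continuous (fun p : ProbabilityMeasure U × ProbabilityMeasure U => lpDist p.1 p.2) := by
  have h := LevyProkhorov.continuous_ofMeasure_probabilityMeasure (Ω := U)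
  have : (fun p : ProbabilityMeasure U × ProbabilityMeasure U => lpDist p.1 p.2) =
      fun p => dist (LevyProkhorov.ofMeasure p.1) (LevyProkhorov.ofMeasure p.2) := rfl
  rw [this]
  fun_prop

theorem aemeas_measure {μ : ℝ → ProbabilityMeasure U} (h : AEStronglyMeasurable μ volume) :
    AEMeasurable (fun t => (μ t : Measure U)) volume := by
  obtain ⟨μ', hm, he⟩ := h
  refine ⟨fun t => (μ' t : Measure U), ?_, ?_⟩
  · refine Measurable.measure_of_isPiSystem_of_isProbabilityMeasure
      (S := {s | IsClosed s}) (by rw [BorelSpace.measurable_eq (α := U), borel_eq_generateFrom_isClosed]) isPiSystem_isClosed ?_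
    intro F hF
    have hp : ∀ n : ℕ, (0:ℝ) < 1 / ((n : ℝ) + 1) := fun n => Nat.one_div_pos_of_nat
    refine measurable_of_tendsto_metrizable (f := fun n t => ∫⁻ x, (thickenedIndicator (hp n) F x : ℝ≥0∞) ∂(μ' t : Measure U)) ?_ ?_
    · intro n
      exact ((cont_lint (thickenedIndicator (hp n) F)).comp_stronglyMeasurable hm).measurable
    · rw [tendsto_pi_nhds]
      intro t
      exact tendsto_lintegral_thickenedIndicator_of_isClosed _ hF hp tendsto_one_div_add_atTop_nhds_zero_nat
  · filter_upwards [he] with t ht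
    rw [ht]

theorem aesm_shift {α : Type*} [TopologicalSpace α] {f : ℝ → α} (h : AEStronglyMeasurable f volume) (τ : ℝ) :
    AEStronglyMeasurable (fun t => f (t + τ)) volume :=
  h.comp_quasiMeasurePreserving (measurePreserving_add_right volume τ).quasiMeasurePreserving

theorem aem_shift {α : Type*} [MeasurableSpace α] {f : ℝ → α} (h : AEMeasurable f volume) (τ : ℝ) :
    AEMeasurable (fun t => f (t + τ)) volume :=
  h.comp_quasiMeasurePreserving (measurePreserving_add_right volume τ).quasiMeasurePreserving

theorem aem_lpDist {μ : ℝ → ProbabilityMeasure U} (h : AEStronglyMeasurable μ volume) (τ : ℝ) :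
    AEMeasurable (fun t => lpDist (μ t) (μ (t + τ))) volume :=
  (cont_lpDist.comp_aestronglyMeasurable (h.prodMk (aesm_shift h τ))).aemeasurable

theorem aesm_int {μ : ℝ → ProbabilityMeasure U} (h : AEStronglyMeasurable μ volume) (F : BoundedContinuousFunction U ℝ) :
    AEStronglyMeasurable (fun t => ∫ x, F x ∂(μ t : Measure U)) volume :=
  (cont_int F).comp_aestronglyMeasurable h

theorem lpE_eq (P Q : ProbabilityMeasure U) :
    levyProkhorovEDist (P : Measure U) (Q : Measure U) = ENNReal.ofReal (lpDist P Q) := by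
  rw [lpDist, levyProkhorovDist, ENNReal.ofReal_toReal (levyProkhorovEDist_ne_top _ _)]

theorem set_est (P Q : ProbabilityMeasure U) (B B' : Set U) (hB : MeasurableSet B) {δ : ℝ} (hδ : 0 < δ)
    (hBB : Metric.thickening δ B ⊆ B') :
    (P : Measure U) B ≤ (Q : Measure U) B' + ENNReal.ofReal (1 + 1 / δ) * ENNReal.ofReal (lpDist P Q) := by
  have h0 : 0 ≤ lpDist P Q := ENNReal.toReal_nonneg
  rcases lt_or_ge (lpDist P Q) δ with h | h
  · refine le_trans ?_ (add_le_add (le_refl ((Q : Measure U) B')) (le_mul_of_one_le_left (zero_le (a := ENNReal.ofReal (lpDist P Q)))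
      (show (1:ℝ≥0∞) ≤ ENNReal.ofReal (1 + 1 / δ) by
        rw [ENNReal.one_le_ofReal]; have : 0 < 1 / δ := by positivity
        linarith)))
    have : ∀ᶠ c in 𝓝[>] (lpDist P Q), (P : Measure U) B ≤ (Q : Measure U) B' + ENNReal.ofReal c := by
      filter_upwards [Ioo_mem_nhdsGT h] with c hc
      have h1 := left_measure_le_of_levyProkhorovEDist_lt (μ := (P : Measure U)) (ν := (Q : Measure U)) (c := ENNReal.ofReal c)
        (by rw [lpE_eq]; exact (ENNReal.ofReal_lt_ofReal_iff (h0.trans_lt hc.1)).2 hc.1) hB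
      rw [ENNReal.toReal_ofReal (h0.trans hc.1.le)] at h1
      refine h1.trans (add_le_add (measure_mono ((Metric.thickening_mono hc.2.le B).trans hBB)) le_rfl)
    have ht : Tendsto (fun c => (Q : Measure U) B' + ENNReal.ofReal c) (𝓝[>] (lpDist P Q)) (𝓝 ((Q : Measure U) B' + ENNReal.ofReal (lpDist P Q))) := by
      refine Tendsto.mono_left ?_ nhdsWithin_le_nhds
      exact (continuous_const.add ENNReal.continuous_ofReal).tendsto _
    exact ge_of_tendsto ht this
  · calc (P : Measure U) B ≤ 1 := prob_le_one
      _ ≤ ENNReal.ofReal (1 + 1 / δ) * ENNReal.ofReal (lpDist P Q) := by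
        rw [← ENNReal.ofReal_mul (by positivity), ENNReal.one_le_ofReal]
        have : 1 ≤ 1 / δ * lpDist P Q := by
          rw [div_mul_eq_mul_div, one_mul, one_le_div hδ]; exact h
        nlinarith
      _ ≤ _ := le_add_self

/-- oscillation set -/
def oscSet (F : U → ℝ) (δ ε : ℝ) : Set U := {x | ∃ y, dist x y < δ ∧ ε < |F x - F y|}

theorem oscSet_isOpen {F : U → ℝ} (hF : Continuous F) (δ ε : ℝ) : IsOpen (oscSet F δ ε) := by
  have : oscSet F δ ε = ⋃ y, {x | dist x y < δ ∧ ε < |F x - F y|} := by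
    ext x; simp [oscSet]
  rw [this]
  refine isOpen_iUnion fun y => ?_
  rw [Set.ofPred_and]
  exact (isOpen_lt (by fun_prop) (by fun_prop)).inter (isOpen_lt (by fun_prop) (by fun_prop))

theorem int_est_nonneg (P Q : ProbabilityMeasure U) (F : BoundedContinuousFunction U ℝ) (hF : ∀ x, 0 ≤ F x)
    {δ ε : ℝ} (hδ : 0 < δ) (hε : 0 < ε) (h : lpDist P Q < δ) :
    ∫ x, F x ∂(P : Measure U) ≤ ∫ x, F x ∂(Q : Measure U) + ε + ‖F‖ * (Q : Measure U).real (oscSet F δ ε) + δ * ‖F‖ := by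
  have h1 := BoundedContinuousFunction.integral_le_of_levyProkhorovEDist_lt (P : Measure U) (Q : Measure U) hδ
    (by rw [lpE_eq]; exact (ENNReal.ofReal_lt_ofReal_iff hδ).2 h) F (Eventually.of_forall hF)
  refine h1.trans (add_le_add ?_ le_rfl)
  let G : BoundedContinuousFunction U ℝ := F + BoundedContinuousFunction.const U ε
  have hGx : ∀ x, G x = F x + ε := fun x => rfl
  have hG : ∫ x, G x ∂(Q : Measure U) = ∫ x, F x ∂(Q : Measure U) + ε := by
    simp only [hGx]
    rw [integral_add (F.integrable _) (integrable_const _)]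
    simp
  have hGn : ‖F‖ ≤ ‖G‖ := by
    rw [BoundedContinuousFunction.norm_le (norm_nonneg _)]
    intro x
    refine le_trans ?_ (G.norm_coe_le_norm x)
    rw [hGx, Real.norm_of_nonneg (hF x), Real.norm_of_nonneg (add_nonneg (hF x) hε.le)]
    linarith
  have hanti : Antitone (fun t : ℝ => (Q : Measure U).real {a | t ≤ G a}) := by
    intro s t hst
    exact measureReal_mono (fun a (ha : t ≤ G a) => hst.trans ha)
  have hItg : ∀ c, IntegrableOn (fun t : ℝ => (Q : Measure U).real {a | t ≤ G a}) (Set.Ioc 0 c) volume := by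
    intro c
    refine (hanti.antitoneOn _).integrableOn_isCompact (isCompact_Icc (a := 0) (b := c)) |>.mono_set Set.Ioc_subset_Icc_self
  rw [← hG, BoundedContinuousFunction.integral_eq_integral_meas_le G (Q : Measure U)
    (Eventually.of_forall fun x => add_nonneg (hF x) hε.le)]
  calc ∫ t in Set.Ioc 0 ‖F‖, (Q : Measure U).real (Metric.thickening δ {a | t ≤ F a})
      ≤ ∫ t in Set.Ioc 0 ‖F‖, ((Q : Measure U).real {a | t ≤ G a} + (Q : Measure U).real (oscSet F δ ε)) := by
        refine integral_mono_of_nonneg (Eventually.of_forall fun _ => measureReal_nonneg) ?_ (Eventually.of_forall ?_)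
        · exact (hItg _).add (integrable_const _)
        · intro t
          refine le_trans (measureReal_mono ?_) (measureReal_union_le _ _)
          intro x hx
          rw [Metric.mem_thickening_iff] at hx
          obtain ⟨y, hy, hxy⟩ := hx
          by_cases hh : ε < |F x - F y|
          · exact Or.inr ⟨y, hxy, hh⟩
          · left
            push Not at hh
            have hy' : t ≤ F y := hy
            have := (abs_le.1 hh).1
            change t ≤ F x + ε
            linarith
    _ = (∫ t in Set.Ioc 0 ‖F‖, (Q : Measure U).real {a | t ≤ G a}) + ‖F‖ * (Q : Measure U).real (oscSet F δ ε) := by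
        rw [integral_add (hItg _) (integrable_const _)]
        simp
    _ ≤ _ := by
        refine add_le_add ?_ le_rfl
        refine setIntegral_mono_set (hItg _) (Eventually.of_forall fun _ => measureReal_nonneg) ?_
        exact (Set.Ioc_subset_Ioc_right hGn).eventuallyLE

theorem int_est (P Q : ProbabilityMeasure U) (F : BoundedContinuousFunction U ℝ)
    {δ ε : ℝ} (hδ : 0 < δ) (hε : 0 < ε) (h : lpDist P Q < δ) :
    |∫ x, F x ∂(P : Measure U) - ∫ x, F x ∂(Q : Measure U)| ≤
      ε + 2 * ‖F‖ * ((P : Measure U).real (oscSet F δ ε) + (Q : Measure U).real (oscSet F δ ε)) + 2 * δ * ‖F‖ := by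
  let G : BoundedContinuousFunction U ℝ := F + BoundedContinuousFunction.const U ‖F‖
  have hGx : ∀ x, G x = F x + ‖F‖ := fun x => rfl
  have hG : ∀ Q : ProbabilityMeasure U, ∫ x, G x ∂(Q : Measure U) = ∫ x, F x ∂(Q : Measure U) + ‖F‖ := by
    intro Q
    simp only [hGx]
    rw [integral_add (F.integrable _) (integrable_const _)]
    simp
  have hG0 : ∀ x, 0 ≤ G x := by
    intro x
    have := (abs_le.1 (F.norm_coe_le_norm x)).1
    rw [hGx]; linarith
  have hGn : ‖G‖ ≤ 2 * ‖F‖ := by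
    rw [BoundedContinuousFunction.norm_le (by positivity)]
    intro x
    rw [Real.norm_of_nonneg (hG0 x), hGx]
    have := (abs_le.1 (F.norm_coe_le_norm x)).2
    linarith
  have hosc : oscSet G δ ε = oscSet F δ ε := by
    simp only [oscSet, hGx, add_sub_add_right_eq_sub]
  have h' : lpDist Q P < δ := by
    have : lpDist Q P = lpDist P Q := levyProkhorovDist_comm _ _
    rwa [this]
  have e1 := int_est_nonneg P Q G hG0 hδ hε h
  have e2 := int_est_nonneg Q P G hG0 hδ hε h'
  rw [hG, hG, hosc] at e1 e2
  have p1 : 0 ≤ (P : Measure U).real (oscSet F δ ε) := measureReal_nonneg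
  have p2 : 0 ≤ (Q : Measure U).real (oscSet F δ ε) := measureReal_nonneg
  have p3 : ‖G‖ * (P : Measure U).real (oscSet F δ ε) ≤ 2 * ‖F‖ * (P : Measure U).real (oscSet F δ ε) := by gcongr
  have p4 : ‖G‖ * (Q : Measure U).real (oscSet F δ ε) ≤ 2 * ‖F‖ * (Q : Measure U).real (oscSet F δ ε) := by gcongr
  have p5 : δ * ‖G‖ ≤ 2 * δ * ‖F‖ := by nlinarith
  have p6 : 0 ≤ 2 * ‖F‖ * (P : Measure U).real (oscSet F δ ε) := by positivity
  have p7 : 0 ≤ 2 * ‖F‖ * (Q : Measure U).real (oscSet F δ ε) := by positivity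
  rw [abs_le]
  constructor <;> linarith

end PD2

open MeasureTheory Filter Topology TopologicalSpace
open scoped ENNReal Pointwise

section PD3

variable {U : Type*} [MetricSpace U] [TopologicalSpace.SeparableSpace U] [MeasurableSpace U] [BorelSpace U]

theorem transfer_lem {x : ProbabilityMeasure U} {μ : ℝ → ProbabilityMeasure U} (hμ : MemWp lpDist 1 x μ)
    {ε : ℝ} (hε : 0 < ε) : ∃ l > 0, ∃ a > 0, ∀ (θ θ' : ℝ → ℝ≥0∞) (C c0 : ℝ≥0∞) (τ : ℝ), C ≠ ⊤ →
      AEMeasurable θ' volume →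
      (∀ σ t, θ t ≤ θ' (t + σ) + c0 + C * ENNReal.ofReal (lpDist (μ t) (μ (t + σ)))
        + C * ENNReal.ofReal (lpDist (μ (t + τ)) (μ (t + τ + σ)))) →
      UD θ ≤ 2 * (ENNReal.ofReal (1 / l) * (∫⁻ t in Set.Icc 0 (a + l), θ' t) + c0
        + 2 * (C * ENNReal.ofReal ε)) := by
  obtain ⟨l, hl, a, ha, hd⟩ := hμ.2 ε hε
  refine ⟨l, hl, a, ha, ?_⟩
  intro θ θ' C c0 τ hC hθ' h
  refine UD_tile hl fun ξ => ?_
  obtain ⟨σ, hσ, hσ'⟩ := hd (-ξ)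
  have hσ2 : weylD lpDist 1 l μ (fun t => μ (t + σ)) < ENNReal.ofReal ε := hσ'
  rw [weylD_one] at hσ2
  have hA := lint_le_of_UA hl hσ2.le
  have hL : AEMeasurable (fun t => ENNReal.ofReal (lpDist (μ t) (μ (t + σ)))) volume :=
    (aem_lpDist hμ.1.1 σ).ennreal_ofReal
  have hL2 : AEMeasurable (fun t => ENNReal.ofReal (lpDist (μ (t + τ)) (μ (t + τ + σ)))) volume :=
    aem_shift hL τ
  have h2 : ∫⁻ t in Set.Icc ξ (ξ + l), ENNReal.ofReal (lpDist (μ (t + τ)) (μ (t + τ + σ)))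
      ≤ ENNReal.ofReal l * ENNReal.ofReal ε := by
    rw [lint_shift (fun t => ENNReal.ofReal (lpDist (μ t) (μ (t + σ)))) τ,
      show ξ + l + τ = ξ + τ + l by ring]
    exact hA _
  have h3 : ∫⁻ t in Set.Icc ξ (ξ + l), θ' (t + σ) ≤ ∫⁻ t in Set.Icc 0 (a + l), θ' t := by
    rw [lint_shift]
    refine lintegral_mono_set (Set.Icc_subset_Icc ?_ ?_)
    · linarith [hσ.1]
    · linarith [hσ.2]
  have hinv : ENNReal.ofReal l * ENNReal.ofReal (1 / l) = 1 := by
    rw [← ENNReal.ofReal_mul hl.le, mul_one_div_cancel hl.ne']; simp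
  calc ∫⁻ t in Set.Icc ξ (ξ + l), θ t
      ≤ ∫⁻ t in Set.Icc ξ (ξ + l), (θ' (t + σ) + c0 + C * ENNReal.ofReal (lpDist (μ t) (μ (t + σ)))
        + C * ENNReal.ofReal (lpDist (μ (t + τ)) (μ (t + τ + σ)))) := lintegral_mono fun t => h σ t
    _ = (∫⁻ t in Set.Icc ξ (ξ + l), θ' (t + σ)) + ENNReal.ofReal l * c0
        + C * (∫⁻ t in Set.Icc ξ (ξ + l), ENNReal.ofReal (lpDist (μ t) (μ (t + σ))))
        + C * (∫⁻ t in Set.Icc ξ (ξ + l), ENNReal.ofReal (lpDist (μ (t + τ)) (μ (t + τ + σ)))) := by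
        rw [lintegral_add_right' _ (hL2.const_mul C).restrict, lintegral_add_right' _ (hL.const_mul C).restrict,
          lintegral_add_right' _ aemeasurable_const, lintegral_const_mul' _ _ hC, lintegral_const_mul' _ _ hC,
          lintegral_const, Measure.restrict_apply_univ, Real.volume_Icc, add_sub_cancel_left, mul_comm c0]
    _ ≤ (∫⁻ t in Set.Icc 0 (a + l), θ' t) + ENNReal.ofReal l * c0
        + C * (ENNReal.ofReal l * ENNReal.ofReal ε) + C * (ENNReal.ofReal l * ENNReal.ofReal ε) := by
        gcongr
        exact hA ξ
    _ = (ENNReal.ofReal l * ENNReal.ofReal (1 / l)) * (∫⁻ t in Set.Icc 0 (a + l), θ' t) + ENNReal.ofReal l * c0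
        + C * (ENNReal.ofReal l * ENNReal.ofReal ε) + C * (ENNReal.ofReal l * ENNReal.ofReal ε) := by
        rw [hinv, one_mul]
    _ = _ := by ring

theorem aem_meas {μ : ℝ → ProbabilityMeasure U} (h : AEStronglyMeasurable μ volume) {B : Set U}
    (hB : MeasurableSet B) : AEMeasurable (fun t => (μ t : Measure U) B) volume :=
  (Measure.measurable_coe hB).comp_aemeasurable (aemeas_measure h)

theorem lint_anti {μ : ℝ → ProbabilityMeasure U} (h : AEStronglyMeasurable μ volume) {B : ℕ → Set U}
    (hB : ∀ n, MeasurableSet (B n)) (ha : Antitone B) (he : ⋂ n, B n = ∅) (a b : ℝ) :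
    Tendsto (fun n => ∫⁻ t in Set.Icc a b, (μ t : Measure U) (B n)) atTop (𝓝 0) := by
  have := tendsto_lintegral_of_dominated_convergence' (μ := volume.restrict (Set.Icc a b))
    (F := fun n t => (μ t : Measure U) (B n)) (f := fun _ => 0) (fun _ => 1)
    (fun n => (aem_meas h (hB n)).restrict) (fun n => Eventually.of_forall fun t => prob_le_one) (by simp)
    (Eventually.of_forall fun t => by
      have := tendsto_measure_iInter_atTop (μ := (μ t : Measure U)) (s := B)
        (fun n => (hB n).nullMeasurableSet) ha ⟨0, measure_ne_top _ _⟩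
      rw [he, measure_empty] at this
      exact this)
  simpa using this

/-- the complement of the union of the first `m+1` balls around the dense sequence -/
def Br (U : Type*) [MetricSpace U] [TopologicalSpace.SeparableSpace U] [Nonempty U] (r : ℝ) (m : ℕ) : Set U :=
  {x | ∀ i ≤ m, r ≤ dist x (denseSeq U i)}

theorem Br_closed [Nonempty U] (r : ℝ) (m : ℕ) : IsClosed (Br U r m) := by
  have : Br U r m = ⋂ i, ⋂ (_ : i ≤ m), {x | r ≤ dist x (denseSeq U i)} := by
    ext x; simp [Br]
  rw [this]
  exact isClosed_iInter fun i => isClosed_iInter fun _ => isClosed_le continuous_const (by fun_prop)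

theorem Br_anti [Nonempty U] (r : ℝ) : Antitone (Br U r) :=
  fun _ _ hmn _ hx i hi => hx i (hi.trans hmn)

theorem Br_iInter [Nonempty U] {r : ℝ} (hr : 0 < r) : ⋂ m, Br U r m = ∅ := by
  rw [Set.eq_empty_iff_forall_notMem]
  intro x hx
  rw [Set.mem_iInter] at hx
  obtain ⟨i, hi⟩ := (denseRange_denseSeq U).exists_dist_lt x hr
  exact absurd (hx i i le_rfl) (not_le.2 hi)

theorem Br_thick [Nonempty U] {r : ℝ} (m : ℕ) : Metric.thickening (r / 2) (Br U r m) ⊆ Br U (r / 2) m := by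
  intro x hx i hi
  rw [Metric.mem_thickening_iff] at hx
  obtain ⟨y, hy, hxy⟩ := hx
  have := hy i hi
  have := dist_triangle y x (denseSeq U i)
  rw [dist_comm y x] at this
  linarith

theorem T_lem [Nonempty U] {x : ProbabilityMeasure U} {μ : ℝ → ProbabilityMeasure U} (hμ : MemWp lpDist 1 x μ)
    {r : ℝ} (hr : 0 < r) {ε : ℝ} (hε : 0 < ε) :
    ∃ m, UD (fun t => (μ t : Measure U) (Br U r m)) < ENNReal.ofReal ε := by
  have hK : 0 < 1 + 1 / (r / 2) := by positivity
  obtain ⟨l, hl, a, ha, h⟩ := transfer_lem hμ (ε := ε / (8 * (1 + 1 / (r / 2)))) (by positivity)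
  have ht := lint_anti hμ.1.1 (B := Br U (r / 2)) (fun n => (Br_closed _ _).measurableSet) (Br_anti _)
    (Br_iInter (half_pos hr)) 0 (a + l)
  have ht2 : Tendsto (fun m => ENNReal.ofReal (1 / l) * ∫⁻ t in Set.Icc 0 (a + l), (μ t : Measure U) (Br U (r / 2) m))
      atTop (𝓝 0) := by
    have := ENNReal.Tendsto.const_mul (a := ENNReal.ofReal (1 / l)) ht (Or.inr ENNReal.ofReal_ne_top)
    rwa [mul_zero] at this
  obtain ⟨m, hm⟩ := (ht2.eventually_lt_const (u := ENNReal.ofReal (ε / 8)) (by simpa using hε)).exists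
  refine ⟨m, ?_⟩
  have := h (fun t => (μ t : Measure U) (Br U r m)) (fun t => (μ t : Measure U) (Br U (r / 2) m))
    (ENNReal.ofReal (1 + 1 / (r / 2))) 0 0 ENNReal.ofReal_ne_top (aem_meas hμ.1.1 (Br_closed _ _).measurableSet) ?_
  · refine this.trans_lt ?_
    rw [← ENNReal.ofReal_mul hK.le, add_zero]
    have e1 : (1 + 1 / (r / 2)) * (ε / (8 * (1 + 1 / (r / 2)))) = ε / 8 := by
      field_simp
    rw [e1]
    calc _ ≤ 2 * (ENNReal.ofReal (ε / 8) + 2 * ENNReal.ofReal (ε / 8)) := by gcongr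
      _ = ENNReal.ofReal (2 * (ε / 8 + 2 * (ε / 8))) := by
        rw [ENNReal.ofReal_mul (by norm_num), ENNReal.ofReal_add (by positivity) (by positivity),
          ENNReal.ofReal_mul (by norm_num)]
        simp
      _ < _ := by
        rw [ENNReal.ofReal_lt_ofReal_iff hε]; linarith
  · intro σ t
    refine le_trans (set_est (μ t) (μ (t + σ)) (Br U r m) _ (Br_closed _ _).measurableSet (half_pos hr) (Br_thick m)) ?_
    rw [add_zero]
    exact le_self_add

theorem O_lem [Nonempty U] [CompleteSpace U] {x : ProbabilityMeasure U} {μ : ℝ → ProbabilityMeasure U} (hμ : MemWp lpDist 1 x μ)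
    (W : ℕ → Set U) (hW : ∀ K, IsCompact K → ∃ n, Disjoint K (W n)) {ε : ℝ} (hε : 0 < ε) :
    ∃ n, UD (fun t => (μ t : Measure U) (W n)) ≤ ENNReal.ofReal ε := by
  by_contra hcon
  push Not at hcon
  have h1 : ∀ n : ℕ, ∃ L : ℝ, (n : ℝ) + 1 ≤ L ∧ ∃ ξ, ENNReal.ofReal ε <
      ENNReal.ofReal (1 / L) * ∫⁻ t in Set.Icc ξ (ξ + L), (μ t : Measure U) (W n) := by
    intro n
    have hf := frequently_lt_of_lt_limsup (by isBoundedDefault) (hcon n)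
    obtain ⟨L, hL1, hL2⟩ := (hf.and_eventually (eventually_ge_atTop ((n : ℝ) + 1))).exists
    obtain ⟨ξ, hξ⟩ := lt_iSup_iff.1 hL1
    exact ⟨L, hL2, ξ, hξ⟩
  choose L hL ξ hξ using h1
  obtain ⟨δ, hδ1, hδ2⟩ := ENNReal.exists_pos_sum_of_countable' (ε := ENNReal.ofReal ε) (by simpa using hε) ℕ
  have hr : ∀ k : ℕ, (0:ℝ) < 1 / ((k:ℝ) + 1) := fun k => by positivity
  have h2 : ∀ k : ℕ, ∃ m, ∀ n, ENNReal.ofReal (1 / L n) * ∫⁻ t in Set.Icc (ξ n) (ξ n + L n),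
      (μ t : Measure U) (Br U (1 / ((k:ℝ) + 1)) m) ≤ δ k := by
    intro k
    obtain ⟨e, he0, he⟩ : ∃ e : ℝ, 0 < e ∧ ENNReal.ofReal e ≤ δ k := by
      obtain ⟨q, hq1, hq2⟩ := ENNReal.lt_iff_exists_real_btwn.1 (hδ1 k)
      exact ⟨q, by simpa using hq2.1, hq2.2.le⟩
    obtain ⟨m, hm⟩ := T_lem hμ (hr k) he0
    have hev := eventually_lt_of_limsup_lt hm
    obtain ⟨L0, hL0⟩ := eventually_atTop.1 hev
    obtain ⟨N, hN⟩ := exists_nat_ge L0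
    have h3 : ∀ᶠ m' in atTop, ∀ n ∈ Finset.range N, ENNReal.ofReal (1 / L n) * ∫⁻ t in Set.Icc (ξ n) (ξ n + L n),
      (μ t : Measure U) (Br U (1 / ((k:ℝ) + 1)) m') < δ k := by
      rw [Filter.eventually_all_finset]
      intro n _
      have ht := lint_anti hμ.1.1 (B := Br U (1 / ((k:ℝ) + 1))) (fun n => (Br_closed _ _).measurableSet) (Br_anti _)
        (Br_iInter (hr k)) (ξ n) (ξ n + L n)
      have := ENNReal.Tendsto.const_mul (a := ENNReal.ofReal (1 / L n)) ht (Or.inr ENNReal.ofReal_ne_top)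
      rw [mul_zero] at this
      exact this.eventually_lt_const (hδ1 k)
    obtain ⟨m', hm', hmm⟩ := (h3.and (eventually_ge_atTop m)).exists
    refine ⟨m', fun n => ?_⟩
    by_cases hn : n < N
    · exact (hm' n (Finset.mem_range.2 hn)).le
    · push Not at hn
      have hLn : L0 ≤ L n := by
        have : (N : ℝ) ≤ n := by exact_mod_cast hn
        linarith [hL n]
      refine le_trans ?_ ((hL0 _ hLn).le.trans he)
      refine le_trans ?_ (le_iSup (fun ξ : ℝ => ENNReal.ofReal (1 / L n) * ∫⁻ t in Set.Icc ξ (ξ + L n), (μ t : Measure U) (Br U (1 / ((k:ℝ) + 1)) m)) (ξ n))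
      gcongr
      exact Br_anti _ hmm
  choose m hm using h2
  let K : Set U := ⋂ k : ℕ, (Br U (1 / ((k:ℝ) + 1)) (m k))ᶜ
  have hKt : TotallyBounded K := by
    rw [Metric.totallyBounded_iff]
    intro e he
    obtain ⟨k, hk⟩ := exists_nat_one_div_lt he
    refine ⟨denseSeq U '' Set.Iic (m k), (Set.finite_Iic _).image _, ?_⟩
    intro y hy
    have hy2 : y ∉ Br U (1 / ((k:ℝ) + 1)) (m k) := Set.mem_iInter.1 hy k
    simp only [Br, Set.mem_ofPred_eq] at hy2
    push Not at hy2
    obtain ⟨i, hi, hi2⟩ := hy2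
    simp only [Set.mem_iUnion]
    exact ⟨denseSeq U i, ⟨i, hi, rfl⟩, hi2.trans hk⟩
  have hKc : IsCompact (closure K) := isCompact_iff_totallyBounded_isComplete.2 ⟨hKt.closure, isClosed_closure.isComplete⟩
  obtain ⟨n, hn⟩ := hW _ hKc
  have hsub : W n ⊆ ⋃ k : ℕ, Br U (1 / ((k:ℝ) + 1)) (m k) := by
    intro y hy
    by_contra hy2
    refine Set.disjoint_left.1 hn (subset_closure ?_) hy
    simp only [Set.mem_iUnion, not_exists] at hy2
    exact Set.mem_iInter.2 hy2
  refine absurd (hξ n) (not_lt.2 ?_)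
  calc ENNReal.ofReal (1 / L n) * ∫⁻ t in Set.Icc (ξ n) (ξ n + L n), (μ t : Measure U) (W n)
      ≤ ENNReal.ofReal (1 / L n) * ∫⁻ t in Set.Icc (ξ n) (ξ n + L n), ∑' k : ℕ, (μ t : Measure U) (Br U (1 / ((k:ℝ) + 1)) (m k)) := by
        gcongr with t
        exact (measure_mono hsub).trans (measure_iUnion_le _)
    _ = ∑' k : ℕ, ENNReal.ofReal (1 / L n) * ∫⁻ t in Set.Icc (ξ n) (ξ n + L n), (μ t : Measure U) (Br U (1 / ((k:ℝ) + 1)) (m k)) := by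
        rw [lintegral_tsum (fun k => (aem_meas hμ.1.1 (Br_closed _ _).measurableSet).restrict), ENNReal.tsum_mul_left]
    _ ≤ ∑' k, δ k := ENNReal.tsum_le_tsum fun k => hm k n
    _ ≤ _ := hδ2.le

end PD3

open MeasureTheory Filter Topology TopologicalSpace
open scoped ENNReal Pointwise

section PD4

variable {U : Type*} [MetricSpace U] [TopologicalSpace.SeparableSpace U] [MeasurableSpace U] [BorelSpace U]

/-- truncated distance of integrals -/
noncomputable def eF (F : BoundedContinuousFunction U ℝ) (P Q : ProbabilityMeasure U) : ℝ≥0∞ :=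
  ENNReal.ofReal (bdist (∫ x, F x ∂(P : Measure U)) (∫ x, F x ∂(Q : Measure U)))

/-- truncated Lévy–Prokhorov distance -/
noncomputable def eM (P Q : ProbabilityMeasure U) : ℝ≥0∞ := ENNReal.ofReal (min 1 (lpDist P Q))

theorem one_pointwise (P Q : ProbabilityMeasure U) (F : BoundedContinuousFunction U ℝ) {δ ε : ℝ} (hδ : 0 < δ) (hδ1 : δ ≤ 1)
    (hε : 0 < ε) :
    eF F P Q ≤ ENNReal.ofReal (2 * ‖F‖) * (P : Measure U) (oscSet F δ ε) +
      (ENNReal.ofReal (2 * ‖F‖) * (Q : Measure U) (oscSet F δ ε) + (ENNReal.ofReal (ε + 2 * δ * ‖F‖) +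
        ENNReal.ofReal (1 / δ) * eM P Q)) := by
  unfold eF eM
  rcases lt_or_ge (lpDist P Q) δ with h | h
  · have h1 := int_est P Q F hδ hε h
    refine le_trans ?_ (add_le_add le_rfl (add_le_add le_rfl le_self_add))
    rw [← ofReal_measureReal (μ := (P : Measure U)), ← ofReal_measureReal (μ := (Q : Measure U)),
      ← ENNReal.ofReal_mul (by positivity), ← ENNReal.ofReal_mul (by positivity),
      ← ENNReal.ofReal_add (by positivity) (by positivity), ← ENNReal.ofReal_add (by positivity) (by positivity)]
    refine ENNReal.ofReal_le_ofReal ((min_le_right _ _).trans ?_)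
    rw [Real.dist_eq]
    linarith
  · refine le_trans ?_ (le_add_self.trans (le_add_self.trans le_add_self))
    rw [← ENNReal.ofReal_mul (by positivity)]
    refine ENNReal.ofReal_le_ofReal ((min_le_left _ _).trans ?_)
    have : δ ≤ min 1 (lpDist P Q) := le_min hδ1 h
    rw [div_mul_eq_mul_div, one_mul, one_le_div hδ]
    exact this

theorem osc_miss {F : U → ℝ} (hF : Continuous F) {ε c : ℝ} (hε : 0 < ε) (K : Set U) (hK : IsCompact K) :
    ∃ n : ℕ, Disjoint K (oscSet F (c / ((n : ℝ) + 1)) ε) := by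
  have h := hK.uniformContinuousAt_of_continuousAt F (fun a _ => hF.continuousAt) (Metric.dist_mem_uniformity hε)
  obtain ⟨δ, hδ, hd⟩ := Metric.mem_uniformity_dist.1 h
  have ht : Tendsto (fun n : ℕ => c / ((n : ℝ) + 1)) atTop (𝓝 0) := by
    have := (tendsto_one_div_add_atTop_nhds_zero_nat (𝕜 := ℝ)).const_mul c
    simpa [div_eq_mul_inv] using this
  obtain ⟨n, hn⟩ := (ht.eventually_lt_const hδ).exists
  refine ⟨n, Set.disjoint_left.2 ?_⟩
  rintro x hx ⟨y, hy, hxy⟩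
  have h3 : dist (F x) (F y) < ε := hd (hy.trans hn) hx
  rw [Real.dist_eq] at h3
  linarith

theorem lemma_one [Nonempty U] [CompleteSpace U] {x : ProbabilityMeasure U} {μ : ℝ → ProbabilityMeasure U}
    (hμ : MemWp lpDist 1 x μ) (F : BoundedContinuousFunction U ℝ) {ε : ℝ} (hε : 0 < ε) :
    ∃ C : ℝ≥0∞, C ≠ ⊤ ∧ ∀ τ, UD (fun t => eF F (μ t) (μ (t + τ))) ≤ ENNReal.ofReal ε + C * UD (fun t => eM (μ t) (μ (t + τ))) := by
  set R := ‖F‖ + 1 with hR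
  have hR0 : 0 < R := by positivity
  set c := min 1 (ε / (8 * R)) with hc
  have hc0 : 0 < c := lt_min one_pos (by positivity)
  obtain ⟨n, hn⟩ := O_lem hμ (fun n => oscSet F (c / ((n : ℝ) + 1)) (ε / 4))
    (fun K hK => osc_miss F.continuous (by positivity) K hK) (ε := ε / (8 * R)) (by positivity)
  set δ := c / ((n : ℝ) + 1) with hδ
  have hδ0 : 0 < δ := by positivity
  have hδc : δ ≤ c := div_le_self hc0.le (by linarith [(Nat.cast_nonneg n : (0:ℝ) ≤ n)])
  have hδ1 : δ ≤ 1 := hδc.trans (min_le_left _ _)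
  have hδ2 : δ ≤ ε / (8 * R) := hδc.trans (min_le_right _ _)
  refine ⟨ENNReal.ofReal (1 / δ), ENNReal.ofReal_ne_top, fun τ => ?_⟩
  have hW : MeasurableSet (oscSet F δ (ε / 4)) := (oscSet_isOpen F.continuous _ _).measurableSet
  have hm := aem_meas hμ.1.1 hW
  have hm' := aem_shift hm τ
  have key : ENNReal.ofReal (2 * ‖F‖) * UD (fun t => (μ t : Measure U) (oscSet F δ (ε / 4))) ≤ ENNReal.ofReal (ε / 4) := by
    calc _ ≤ ENNReal.ofReal (2 * ‖F‖) * ENNReal.ofReal (ε / (8 * R)) := by gcongr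
      _ = ENNReal.ofReal (2 * ‖F‖ * (ε / (8 * R))) := by rw [← ENNReal.ofReal_mul (by positivity)]
      _ ≤ _ := by
        refine ENNReal.ofReal_le_ofReal ?_
        rw [mul_div_assoc', div_le_iff₀ (by positivity)]
        nlinarith [norm_nonneg F]
  have key2 : ε / 4 + 2 * δ * ‖F‖ ≤ ε / 2 := by
    have : 2 * δ * R ≤ 2 * (ε / (8 * R)) * R := by gcongr
    have e : 2 * (ε / (8 * R)) * R = ε / 4 := by field_simp; norm_num
    nlinarith [norm_nonneg F]
  calc UD (fun t => eF F (μ t) (μ (t + τ)))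
      ≤ UD (fun t => ENNReal.ofReal (2 * ‖F‖) * (μ t : Measure U) (oscSet F δ (ε / 4)) +
        (ENNReal.ofReal (2 * ‖F‖) * (μ (t + τ) : Measure U) (oscSet F δ (ε / 4)) + (ENNReal.ofReal (ε / 4 + 2 * δ * ‖F‖) +
        ENNReal.ofReal (1 / δ) * eM (μ t) (μ (t + τ))))) := UD_mono fun t => one_pointwise _ _ F hδ0 hδ1 (by positivity)
    _ ≤ ENNReal.ofReal (2 * ‖F‖) * UD (fun t => (μ t : Measure U) (oscSet F δ (ε / 4))) +
        (ENNReal.ofReal (2 * ‖F‖) * UD (fun t => (μ t : Measure U) (oscSet F δ (ε / 4))) + (ENNReal.ofReal (ε / 4 + 2 * δ * ‖F‖) +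
        ENNReal.ofReal (1 / δ) * UD (fun t => eM (μ t) (μ (t + τ))))) := by
        refine (UD_add (hm.const_mul _)).trans (add_le_add (UD_const_mul _ ENNReal.ofReal_ne_top _).le ?_)
        refine (UD_add (hm'.const_mul _)).trans (add_le_add ?_ ?_)
        · rw [UD_const_mul _ ENNReal.ofReal_ne_top, UD_shift (fun t => (μ t : Measure U) (oscSet F δ (ε / 4)))]
        · refine (UD_add aemeasurable_const).trans (add_le_add (UD_const _).le (UD_const_mul _ ENNReal.ofReal_ne_top _).le)
    _ ≤ ENNReal.ofReal (ε / 4) + (ENNReal.ofReal (ε / 4) + (ENNReal.ofReal (ε / 2) +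
        ENNReal.ofReal (1 / δ) * UD (fun t => eM (μ t) (μ (t + τ))))) := by
        refine add_le_add key (add_le_add key (add_le_add (ENNReal.ofReal_le_ofReal key2) le_rfl))
    _ = _ := by
        rw [← add_assoc, ← add_assoc, ← ENNReal.ofReal_add (by positivity) (by positivity),
          ← ENNReal.ofReal_add (by positivity) (by positivity)]
        congr 2
        ring

/-- test functions -/
noncomputable def tF [Nonempty U] {r : ℝ} (hr : 0 < r) (I : Finset ℕ) : BoundedContinuousFunction U ℝ :=
  BoundedContinuousFunction.ofNormedAddCommGroup
    (fun x => (thickenedIndicator hr (⋃ i ∈ I, Metric.ball (denseSeq U i) r) x : ℝ))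
    (NNReal.continuous_coe.comp (thickenedIndicator hr _).continuous) 1
    (fun x => by
      rw [Real.norm_of_nonneg NNReal.zero_le_coe]
      exact_mod_cast thickenedIndicator_le_one hr _ x)

theorem tF_lip [Nonempty U] {r : ℝ} (hr : 0 < r) (I : Finset ℕ) : ∃ K, LipschitzWith K (tF (U := U) hr I) := by
  refine ⟨_, LipschitzWith.comp (g := fun x : U => thickenedIndicator hr (⋃ i ∈ I, Metric.ball (denseSeq U i) r) x) (f := ((↑) : NNReal → ℝ)) (Kf := 1) ?_ (lipschitzWith_thickenedIndicator hr _)⟩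
  exact LipschitzWith.of_dist_le_mul fun x y => by simp [NNReal.dist_eq, Real.dist_eq]

theorem tF_lo [Nonempty U] {r : ℝ} (hr : 0 < r) (I : Finset ℕ) (P : ProbabilityMeasure U) :
    (P : Measure U).real (⋃ i ∈ I, Metric.ball (denseSeq U i) r) ≤ ∫ x, tF hr I x ∂(P : Measure U) := by
  have hV : MeasurableSet (⋃ i ∈ I, Metric.ball (denseSeq U i) r) :=
    (isOpen_iUnion fun i => isOpen_iUnion fun _ => Metric.isOpen_ball).measurableSet
  rw [← integral_indicator_one hV]
  refine integral_mono ((integrable_const (1:ℝ)).indicator hV) ((tF hr I).integrable _) ?_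
  intro x
  by_cases hx : x ∈ (⋃ i ∈ I, Metric.ball (denseSeq U i) r)
  · rw [Set.indicator_of_mem hx]
    change (1:ℝ) ≤ (thickenedIndicator hr _ x : ℝ)
    rw [thickenedIndicator_one hr _ hx]; simp
  · rw [Set.indicator_of_notMem hx]
    exact NNReal.zero_le_coe

theorem tF_hi [Nonempty U] {r : ℝ} (hr : 0 < r) (I : Finset ℕ) (P : ProbabilityMeasure U) :
    ∫ x, tF hr I x ∂(P : Measure U) ≤ (P : Measure U).real (Metric.thickening r (⋃ i ∈ I, Metric.ball (denseSeq U i) r)) := by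
  have hV : MeasurableSet (Metric.thickening r (⋃ i ∈ I, Metric.ball (denseSeq U i) r)) :=
    Metric.isOpen_thickening.measurableSet
  rw [← integral_indicator_one hV]
  refine integral_mono ((tF hr I).integrable _) ((integrable_const (1:ℝ)).indicator hV) ?_
  intro x
  by_cases hx : x ∈ Metric.thickening r (⋃ i ∈ I, Metric.ball (denseSeq U i) r)
  · rw [Set.indicator_of_mem hx]
    change (thickenedIndicator hr _ x : ℝ) ≤ (1:ℝ)
    exact_mod_cast thickenedIndicator_le_one hr _ x
  · rw [Set.indicator_of_notMem hx]
    change (thickenedIndicator hr _ x : ℝ) ≤ (0:ℝ)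
    rw [thickenedIndicator_zero hr _ hx]; simp

theorem two_pointwise [Nonempty U] (P Q : ProbabilityMeasure U) {ε : ℝ} (hε : 0 < ε) (hε1 : ε ≤ 1)
    (hr : 0 < ε / 4) (m : ℕ) :
    eM P Q ≤ ENNReal.ofReal ε + ENNReal.ofReal (1 / ε) * ((P : Measure U) (Br U (ε / 4) m) +
      ∑ I ∈ (Finset.range (m + 1)).powerset, eF (tF hr I) P Q) := by
  set S := (P : Measure U) (Br U (ε / 4) m) + ∑ I ∈ (Finset.range (m + 1)).powerset, eF (tF hr I) P Q with hS
  rcases le_or_gt (ENNReal.ofReal ε) S with h | h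
  · refine le_trans ?_ le_add_self
    calc eM P Q ≤ 1 := by
          rw [eM]; exact ENNReal.ofReal_le_one.2 (min_le_left _ _)
      _ = ENNReal.ofReal (1 / ε) * ENNReal.ofReal ε := by
          rw [← ENNReal.ofReal_mul (by positivity), one_div_mul_cancel hε.ne', ENNReal.ofReal_one]
      _ ≤ _ := by gcongr
  · refine le_trans ?_ le_self_add
    refine ENNReal.ofReal_le_ofReal ((min_le_right _ _).trans ?_)
    refine levyProkhorovDist_le_of_forall_le _ _ hε.le ?_
    intro ε' A hε' hA
    classical
    let I : Finset ℕ := (Finset.range (m + 1)).filter fun i => (Metric.ball (denseSeq U i) (ε / 4) ∩ A).Nonempty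
    have hI : I ∈ (Finset.range (m + 1)).powerset := Finset.mem_powerset.2 (Finset.filter_subset _ _)
    have hsub : A ⊆ Br U (ε / 4) m ∪ ⋃ i ∈ I, Metric.ball (denseSeq U i) (ε / 4) := by
      intro a ha
      by_cases hb : a ∈ Br U (ε / 4) m
      · exact Or.inl hb
      · right
        simp only [Br, Set.mem_ofPred_eq] at hb
        push Not at hb
        obtain ⟨i, hi, hi2⟩ := hb
        simp only [Set.mem_iUnion]
        exact ⟨i, Finset.mem_filter.2 ⟨Finset.mem_range.2 (Nat.lt_succ_of_le hi), a, hi2, ha⟩, hi2⟩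
    have hth : Metric.thickening (ε / 4) (⋃ i ∈ I, Metric.ball (denseSeq U i) (ε / 4)) ⊆ Metric.thickening ε' A := by
      intro z hz
      rw [Metric.mem_thickening_iff] at hz ⊢
      obtain ⟨y, hy, hzy⟩ := hz
      simp only [Set.mem_iUnion] at hy
      obtain ⟨i, hi, hyi⟩ := hy
      obtain ⟨a, ha, haA⟩ := (Finset.mem_filter.1 hi).2
      refine ⟨a, haA, ?_⟩
      rw [Metric.mem_ball] at hyi ha
      have h1 := dist_triangle z y a
      have h2 := dist_triangle_right y a (denseSeq U i)
      linarith
    have hle : eF (tF hr I) P Q < ENNReal.ofReal ε := by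
      refine lt_of_le_of_lt ?_ h
      exact (Finset.single_le_sum (f := fun I => eF (tF hr I) P Q) (fun _ _ => zero_le) hI).trans le_add_self
    have hdist : eF (tF hr I) P Q = ENNReal.ofReal |(∫ x, tF hr I x ∂(P : Measure U)) - (∫ x, tF hr I x ∂(Q : Measure U))| := by
      rw [eF] at hle ⊢
      rw [ENNReal.ofReal_lt_ofReal_iff hε] at hle
      unfold bdist at hle ⊢
      rw [Real.dist_eq] at hle ⊢
      rcases min_lt_iff.1 hle with h' | h'
      · linarith
      · rw [min_eq_right (by linarith)]
    have h3 : (P : Measure U) (⋃ i ∈ I, Metric.ball (denseSeq U i) (ε / 4)) ≤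
        (Q : Measure U) (Metric.thickening ε' A) + eF (tF hr I) P Q := by
      refine le_trans ?_ (add_le_add (measure_mono hth) le_rfl)
      rw [hdist, ← ofReal_measureReal (μ := (P : Measure U)) (measure_ne_top _ _),
        ← ofReal_measureReal (μ := (Q : Measure U)) (measure_ne_top _ _),
        ← ENNReal.ofReal_add (by positivity) (by positivity)]
      refine ENNReal.ofReal_le_ofReal ?_
      have a1 := tF_lo hr I P
      have a2 := tF_hi hr I Q
      have a3 := le_abs_self ((∫ x, tF hr I x ∂(P : Measure U)) - (∫ x, tF hr I x ∂(Q : Measure U)))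
      linarith
    calc (P : Measure U) A ≤ (P : Measure U) (Br U (ε / 4) m) + (P : Measure U) (⋃ i ∈ I, Metric.ball (denseSeq U i) (ε / 4)) :=
          (measure_mono hsub).trans (measure_union_le _ _)
      _ ≤ (P : Measure U) (Br U (ε / 4) m) + ((Q : Measure U) (Metric.thickening ε' A) + eF (tF hr I) P Q) := by gcongr
      _ = (Q : Measure U) (Metric.thickening ε' A) + ((P : Measure U) (Br U (ε / 4) m) + eF (tF hr I) P Q) := by ring
      _ ≤ (Q : Measure U) (Metric.thickening ε' A) + S := by
          gcongr
          rw [hS]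
          gcongr
          exact Finset.single_le_sum (f := fun I => eF (tF hr I) P Q) (fun _ _ => zero_le) hI
      _ ≤ _ := by
          gcongr
          exact h.le.trans (ENNReal.ofReal_le_ofReal hε'.le)

theorem aem_eF {μ : ℝ → ProbabilityMeasure U} (h : AEStronglyMeasurable μ volume) (F : BoundedContinuousFunction U ℝ) (τ : ℝ) :
    AEMeasurable (fun t => eF F (μ t) (μ (t + τ))) volume := by
  have h1 := (aesm_int h F).aemeasurable
  have h2 := aem_shift h1 τ
  exact (aemeasurable_const.min (h1.dist h2)).ennreal_ofReal

theorem lemma_two [Nonempty U] {x : ProbabilityMeasure U} {μ : ℝ → ProbabilityMeasure U}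
    (hμ : MemWp lpDist 1 x μ) {ε : ℝ} (hε : 0 < ε) :
    ∃ (C : ℝ≥0∞) (s : Finset (Finset ℕ)) (F : Finset ℕ → BoundedContinuousFunction U ℝ), C ≠ ⊤ ∧ (∀ I, ∃ K, LipschitzWith K (F I)) ∧
      ∀ τ, UD (fun t => eM (μ t) (μ (t + τ))) ≤ ENNReal.ofReal ε + C * ∑ I ∈ s, UD (fun t => eF (F I) (μ t) (μ (t + τ))) := by
  set e := min 1 (ε / 2) with he
  have he0 : 0 < e := lt_min one_pos (by positivity)
  have he1 : e ≤ 1 := min_le_left _ _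
  have he2 : e ≤ ε / 2 := min_le_right _ _
  have hr : 0 < e / 4 := by positivity
  obtain ⟨m, hm⟩ := T_lem hμ hr (ε := e * (ε / 2)) (by positivity)
  refine ⟨ENNReal.ofReal (1 / e), (Finset.range (m + 1)).powerset, fun I => tF hr I, ENNReal.ofReal_ne_top,
    fun I => tF_lip hr I, fun τ => ?_⟩
  have hB := aem_meas hμ.1.1 (Br_closed (U := U) (e / 4) m).measurableSet
  calc UD (fun t => eM (μ t) (μ (t + τ)))
      ≤ UD (fun t => ENNReal.ofReal e + ENNReal.ofReal (1 / e) * ((μ t : Measure U) (Br U (e / 4) m) +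
      ∑ I ∈ (Finset.range (m + 1)).powerset, eF (tF hr I) (μ t) (μ (t + τ)))) := UD_mono fun t => two_pointwise _ _ he0 he1 hr m
    _ ≤ ENNReal.ofReal e + ENNReal.ofReal (1 / e) * (UD (fun t => (μ t : Measure U) (Br U (e / 4) m)) +
      ∑ I ∈ (Finset.range (m + 1)).powerset, UD (fun t => eF (tF hr I) (μ t) (μ (t + τ)))) := by
        refine (UD_add aemeasurable_const).trans (add_le_add (UD_const _).le ?_)
        rw [UD_const_mul _ ENNReal.ofReal_ne_top]
        refine mul_le_mul_right ((UD_add hB).trans (add_le_add le_rfl ?_)) _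
        exact UD_finset_sum _ _ fun I _ => aem_eF hμ.1.1 _ τ
    _ ≤ ENNReal.ofReal e + ENNReal.ofReal (1 / e) * (ENNReal.ofReal (e * (ε / 2)) +
      ∑ I ∈ (Finset.range (m + 1)).powerset, UD (fun t => eF (tF hr I) (μ t) (μ (t + τ)))) := by gcongr
    _ = ENNReal.ofReal (e + ε / 2) + ENNReal.ofReal (1 / e) *
      ∑ I ∈ (Finset.range (m + 1)).powerset, UD (fun t => eF (tF hr I) (μ t) (μ (t + τ))) := by
        rw [mul_add, ← ENNReal.ofReal_mul (by positivity), ← add_assoc, ← ENNReal.ofReal_add (by positivity) (by positivity)]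
        congr 3
        field_simp
    _ ≤ _ := by
        gcongr
        linarith

end PD4

open MeasureTheory Filter Topology TopologicalSpace
open scoped ENNReal Pointwise

section PD5

theorem L1_cont {g : ℝ → ℝ} (hg : AEStronglyMeasurable g volume) {R : ℝ} (hR : ∀ t, |g t| ≤ R) (a b : ℝ) :
    Tendsto (fun τ => ∫⁻ t in Set.Icc a b, ENNReal.ofReal |g t - g (t + τ)|) (𝓝 0) (𝓝 0) := by
  rw [ENNReal.tendsto_nhds_zero]
  intro ε hε
  obtain ⟨e, he0, he⟩ : ∃ e : ℝ, 0 < e ∧ ENNReal.ofReal e ≤ ε := by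
    obtain ⟨q, hq1, hq2⟩ := ENNReal.lt_iff_exists_real_btwn.1 hε
    exact ⟨q, by simpa using hq2.1, hq2.2.le⟩
  let f := (Set.Icc (a - 1) (b + 1)).indicator g
  have hf : Integrable f volume := by
    rw [integrable_indicator_iff measurableSet_Icc]
    refine Measure.integrableOn_of_bounded (M := R) (by simp) hg (Eventually.of_forall hR)
  obtain ⟨h, hhs, hhe, hhc, hhi⟩ := hf.exists_hasCompactSupport_lintegral_sub_le (ε := ENNReal.ofReal (e / 4)) (by simpa using he0)
  have hu := hhs.uniformContinuous_of_continuous hhc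
  set k := e / (2 * (|b - a| + 1)) with hk
  have hk0 : 0 < k := by positivity
  obtain ⟨δ, hδ, hd⟩ := Metric.uniformContinuous_iff.1 hu k hk0
  filter_upwards [Metric.ball_mem_nhds (0:ℝ) (lt_min hδ one_pos)] with τ hτ
  rw [Metric.mem_ball, dist_zero_right, Real.norm_eq_abs, lt_min_iff] at hτ
  refine le_trans ?_ he
  have hmeas : AEMeasurable (fun t => ‖f t - h t‖ₑ) volume := (hf.1.sub hhc.aestronglyMeasurable).enorm
  have hmeas2 := aem_shift hmeas τ
  calc ∫⁻ t in Set.Icc a b, ENNReal.ofReal |g t - g (t + τ)|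
      ≤ ∫⁻ t in Set.Icc a b, (‖f t - h t‖ₑ + ‖f (t + τ) - h (t + τ)‖ₑ + ENNReal.ofReal k) := by
        refine setLIntegral_mono' measurableSet_Icc fun t ht => ?_
        have e1 : g t = f t := by
          refine (Set.indicator_of_mem ?_ g).symm
          exact ⟨by linarith [ht.1], by linarith [ht.2]⟩
        have e2 : g (t + τ) = f (t + τ) := by
          refine (Set.indicator_of_mem ?_ g).symm
          have := abs_lt.1 hτ.2
          exact ⟨by linarith [ht.1], by linarith [ht.2]⟩
        rw [e1, e2]
        rw [← ofReal_norm_eq_enorm, ← ofReal_norm_eq_enorm, ← ENNReal.ofReal_add (by positivity) (by positivity),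
          ← ENNReal.ofReal_add (by positivity) (by positivity)]
        refine ENNReal.ofReal_le_ofReal ?_
        have h3 : dist (h t) (h (t + τ)) < k := hd (by simpa [Real.dist_eq] using hτ.1)
        rw [Real.dist_eq] at h3
        rw [Real.norm_eq_abs, Real.norm_eq_abs]
        have h4 : f t - f (t + τ) = (f t - h t) + (h t - h (t + τ)) - (f (t + τ) - h (t + τ)) := by ring
        rw [h4]
        have h5 := abs_sub (f t - h t + (h t - h (t + τ))) (f (t + τ) - h (t + τ))
        have h6 := abs_add_le (f t - h t) (h t - h (t + τ))
        linarith
    _ = (∫⁻ t in Set.Icc a b, ‖f t - h t‖ₑ) + (∫⁻ t in Set.Icc a b, ‖f (t + τ) - h (t + τ)‖ₑ)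
        + ENNReal.ofReal k * ENNReal.ofReal (b - a) := by
        rw [lintegral_add_right' _ aemeasurable_const, lintegral_add_left' hmeas.restrict, lintegral_const,
          Measure.restrict_apply_univ, Real.volume_Icc]
    _ ≤ ENNReal.ofReal (e / 4) + ENNReal.ofReal (e / 4) + ENNReal.ofReal (e / 2) := by
        refine add_le_add (add_le_add ((setLIntegral_le_lintegral _ _).trans hhe) ?_) ?_
        · rw [lint_shift (fun t => ‖f t - h t‖ₑ)]
          exact (setLIntegral_le_lintegral _ _).trans hhe
        · rw [← ENNReal.ofReal_mul hk0.le]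
          refine ENNReal.ofReal_le_ofReal ?_
          rw [hk, div_mul_eq_mul_div, div_le_div_iff₀ (by positivity) (by positivity)]
          nlinarith [le_abs_self (b - a)]
    _ = ENNReal.ofReal e := by
        rw [← ENNReal.ofReal_add (by positivity) (by positivity), ← ENNReal.ofReal_add (by positivity) (by positivity)]
        congr 1; ring

variable {U : Type*} [MetricSpace U] [TopologicalSpace.SeparableSpace U] [MeasurableSpace U] [BorelSpace U]

theorem int_abs_le (F : BoundedContinuousFunction U ℝ) (P : ProbabilityMeasure U) :
    |∫ x, F x ∂(P : Measure U)| ≤ ‖F‖ := by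
  have := F.norm_integral_le_norm (μ := (P : Measure U))
  simpa using this

theorem lip_est (F : BoundedContinuousFunction U ℝ) {K : NNReal} (hF : LipschitzWith K F) {ε : ℝ} (hε : 0 < ε) :
    ∃ C : ℝ, 0 ≤ C ∧ ∀ P Q : ProbabilityMeasure U,
      |∫ x, F x ∂(P : Measure U) - ∫ x, F x ∂(Q : Measure U)| ≤ ε + C * lpDist P Q := by
  set δ := min (ε / 2 / (K + 1)) (ε / 2 / (2 * (‖F‖ + 1))) with hδ
  have hδ0 : 0 < δ := lt_min (by positivity) (by positivity)
  have h1 : δ * (K + 1) ≤ ε / 2 := by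
    rw [← le_div_iff₀ (by positivity)]; exact min_le_left _ _
  have h2 : δ * (2 * (‖F‖ + 1)) ≤ ε / 2 := by
    rw [← le_div_iff₀ (by positivity)]; exact min_le_right _ _
  have hK : (0:ℝ) ≤ K := K.2
  refine ⟨2 * ‖F‖ / δ, by positivity, fun P Q => ?_⟩
  have hlp : 0 ≤ lpDist P Q := ENNReal.toReal_nonneg
  rcases lt_or_ge (lpDist P Q) δ with h | h
  · have h3 := int_est P Q F hδ0 (half_pos hε) h
    have h4 : oscSet F δ (ε / 2) = ∅ := by
      rw [Set.eq_empty_iff_forall_notMem]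
      rintro x ⟨y, hy, hxy⟩
      have h5 := hF.dist_le_mul x y
      rw [Real.dist_eq] at h5
      have : (K:ℝ) * dist x y ≤ K * δ := by gcongr
      nlinarith
    rw [h4] at h3
    simp only [measureReal_empty, add_zero, mul_zero] at h3
    have : 0 ≤ 2 * ‖F‖ / δ * lpDist P Q := by positivity
    nlinarith
  · have h3 : 2 * ‖F‖ ≤ 2 * ‖F‖ / δ * lpDist P Q := by
      rw [div_mul_eq_mul_div, le_div_iff₀ hδ0]
      gcongr
    have h4 := abs_sub (∫ x, F x ∂(P : Measure U)) (∫ x, F x ∂(Q : Measure U))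
    have h5 := int_abs_le F P
    have h6 := int_abs_le F Q
    linarith

theorem lip_cont {x : ProbabilityMeasure U} {μ : ℝ → ProbabilityMeasure U}
    (hμ : MemWp lpDist 1 x μ) (F : BoundedContinuousFunction U ℝ) {K : NNReal} (hF : LipschitzWith K F) :
    Tendsto (fun τ => UD (fun t => eF F (μ t) (μ (t + τ)))) (𝓝 0) (𝓝 0) := by
  rw [ENNReal.tendsto_nhds_zero]
  intro ε hε
  obtain ⟨e, he0, he⟩ : ∃ e : ℝ, 0 < e ∧ ENNReal.ofReal e ≤ ε := by
    obtain ⟨q, hq1, hq2⟩ := ENNReal.lt_iff_exists_real_btwn.1 hε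
    exact ⟨q, by simpa using hq2.1, hq2.2.le⟩
  obtain ⟨C, hC, hest⟩ := lip_est F hF (ε := e / 16) (by positivity)
  obtain ⟨l, hl, a, ha, htr⟩ := transfer_lem hμ (ε := e / (16 * (C + 1))) (by positivity)
  let g := fun t => ∫ x, F x ∂(μ t : Measure U)
  have hg : AEStronglyMeasurable g volume := aesm_int hμ.1.1 F
  have hc := L1_cont hg (R := ‖F‖) (fun t => int_abs_le F (μ t)) 0 (a + l)
  have hc2 := ENNReal.Tendsto.const_mul (a := ENNReal.ofReal (1 / l)) hc (Or.inr ENNReal.ofReal_ne_top)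
  rw [mul_zero] at hc2
  filter_upwards [hc2.eventually_lt_const (u := ENNReal.ofReal (e / 8)) (by simpa using he0)] with τ hτ
  refine le_trans ?_ he
  have := htr (fun t => eF F (μ t) (μ (t + τ))) (fun t => ENNReal.ofReal |g t - g (t + τ)|) (ENNReal.ofReal C)
    (ENNReal.ofReal (e / 8)) τ ENNReal.ofReal_ne_top ?_ ?_
  · refine this.trans ?_
    rw [← ENNReal.ofReal_mul hC]
    have hCe : C * (e / (16 * (C + 1))) ≤ e / 16 := by
      rw [mul_div_assoc', div_le_div_iff₀ (by positivity) (by positivity)]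
      nlinarith
    calc _ ≤ 2 * (ENNReal.ofReal (e / 8) + ENNReal.ofReal (e / 8) + 2 * ENNReal.ofReal (e / 16)) := by gcongr
      _ = ENNReal.ofReal (2 * (e / 8 + e / 8 + 2 * (e / 16))) := by
        rw [ENNReal.ofReal_mul (by norm_num), ENNReal.ofReal_add (by positivity) (by positivity),
          ENNReal.ofReal_add (by positivity) (by positivity), ENNReal.ofReal_mul (by norm_num)]
        simp
      _ ≤ _ := ENNReal.ofReal_le_ofReal (by linarith)
  · have h1 := hg.sub (aesm_shift hg τ)
    exact (h1.norm.aemeasurable).ennreal_ofReal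
  · intro σ t
    have p1 : 0 ≤ lpDist (μ t) (μ (t + σ)) := ENNReal.toReal_nonneg
    have p2 : 0 ≤ lpDist (μ (t + τ)) (μ (t + τ + σ)) := ENNReal.toReal_nonneg
    rw [← ENNReal.ofReal_mul hC, ← ENNReal.ofReal_mul hC, ← ENNReal.ofReal_add (by positivity) (by positivity),
      ← ENNReal.ofReal_add (by positivity) (by positivity), ← ENNReal.ofReal_add (by positivity) (by positivity)]
    refine ENNReal.ofReal_le_ofReal ((min_le_right _ _).trans ?_)
    rw [Real.dist_eq]
    have q1 : |g t - g (t + σ)| ≤ _ := hest (μ t) (μ (t + σ))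
    have q2 : |g (t + τ) - g (t + τ + σ)| ≤ _ := hest (μ (t + τ)) (μ (t + τ + σ))
    change |g t - g (t + τ)| ≤ |g (t + σ) - g (t + σ + τ)| + _ + _ + _
    rw [show t + σ + τ = t + τ + σ by ring]
    have h4 : g t - g (t + τ) = (g t - g (t + σ)) + (g (t + σ) - g (t + τ + σ)) - (g (t + τ) - g (t + τ + σ)) := by ring
    have h5 := abs_sub (g t - g (t + σ) + (g (t + σ) - g (t + τ + σ))) (g (t + τ) - g (t + τ + σ))
    have h6 := abs_add_le (g t - g (t + σ)) (g (t + σ) - g (t + τ + σ))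
    rw [← h4] at h5
    linarith

theorem two_tendsto [Nonempty U] {x : ProbabilityMeasure U} {μ : ℝ → ProbabilityMeasure U}
    (hμ : MemWp lpDist 1 x μ) {ι : Type*} (l : Filter ι) (τ : ι → ℝ)
    (h : ∀ F : BoundedContinuousFunction U ℝ, (∃ K, LipschitzWith K F) →
      Tendsto (fun j => UD (fun t => eF F (μ t) (μ (t + τ j)))) l (𝓝 0)) :
    Tendsto (fun j => UD (fun t => eM (μ t) (μ (t + τ j)))) l (𝓝 0) := by
  rw [ENNReal.tendsto_nhds_zero]
  intro ε hε
  obtain ⟨e, he0, he⟩ : ∃ e : ℝ, 0 < e ∧ ENNReal.ofReal e ≤ ε := by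
    obtain ⟨q, hq1, hq2⟩ := ENNReal.lt_iff_exists_real_btwn.1 hε
    exact ⟨q, by simpa using hq2.1, hq2.2.le⟩
  obtain ⟨C, s, F, hC, hF, hle⟩ := lemma_two hμ (half_pos he0)
  have h1 : Tendsto (fun j => C * ∑ I ∈ s, UD (fun t => eF (F I) (μ t) (μ (t + τ j)))) l (𝓝 0) := by
    have h2 := tendsto_finsetSum s (fun I _ => h (F I) (hF I))
    rw [Finset.sum_const_zero] at h2
    have := ENNReal.Tendsto.const_mul (a := C) h2 (Or.inr hC)
    rwa [mul_zero] at this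
  filter_upwards [h1.eventually_lt_const (u := ENNReal.ofReal (e / 2)) (by simpa using he0)] with j hj
  refine (hle (τ j)).trans (le_trans ?_ he)
  refine (add_le_add le_rfl hj.le).trans ?_
  rw [← ENNReal.ofReal_add (by positivity) (by positivity), add_halves]

theorem one_tendsto [Nonempty U] [CompleteSpace U] {x : ProbabilityMeasure U} {μ : ℝ → ProbabilityMeasure U}
    (hμ : MemWp lpDist 1 x μ) {ι : Type*} (l : Filter ι) (τ : ι → ℝ)
    (h : Tendsto (fun j => UD (fun t => eM (μ t) (μ (t + τ j)))) l (𝓝 0)) (F : BoundedContinuousFunction U ℝ) :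
      Tendsto (fun j => UD (fun t => eF F (μ t) (μ (t + τ j)))) l (𝓝 0) := by
  rw [ENNReal.tendsto_nhds_zero]
  intro ε hε
  obtain ⟨e, he0, he⟩ : ∃ e : ℝ, 0 < e ∧ ENNReal.ofReal e ≤ ε := by
    obtain ⟨q, hq1, hq2⟩ := ENNReal.lt_iff_exists_real_btwn.1 hε
    exact ⟨q, by simpa using hq2.1, hq2.2.le⟩
  obtain ⟨C, hC, hle⟩ := lemma_one hμ F (half_pos he0)
  have h1 : Tendsto (fun j => C * UD (fun t => eM (μ t) (μ (t + τ j)))) l (𝓝 0) := by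
    have := ENNReal.Tendsto.const_mul (a := C) h (Or.inr hC)
    rwa [mul_zero] at this
  filter_upwards [h1.eventually_lt_const (u := ENNReal.ofReal (e / 2)) (by simpa using he0)] with j hj
  refine (hle (τ j)).trans (le_trans ?_ he)
  refine (add_le_add le_rfl hj.le).trans ?_
  rw [← ENNReal.ofReal_add (by positivity) (by positivity), add_halves]

theorem cont_M [Nonempty U] {x : ProbabilityMeasure U} {μ : ℝ → ProbabilityMeasure U}
    (hμ : MemWp lpDist 1 x μ) : Tendsto (fun τ => UD (fun t => eM (μ t) (μ (t + τ)))) (𝓝 0) (𝓝 0) :=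
  two_tendsto hμ (𝓝 0) (fun τ => τ) fun F ⟨_, hK⟩ => lip_cont hμ F hK

end PD5

open MeasureTheory Filter Topology TopologicalSpace
open scoped ENNReal Pointwise

section PD6

theorem UD_le_one {θ : ℝ → ℝ≥0∞} (h : ∀ t, θ t ≤ 1) : UD θ ≤ 1 :=
  (UD_mono h).trans (UD_const 1).le

theorem semiW_tendsto {α : Type*} (d : α → α → ℝ) (f : ℝ → α)
    (h1 : ∀ x y, d x y ≤ 1) (h0 : ∀ x, d x x = 0) (hs : ∀ x y, d x y = d y x)
    (ht : ∀ x y z, d x z ≤ d x y + d y z)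
    (hm : ∀ τ, AEMeasurable (fun t => ENNReal.ofReal (d (f t) (f (t + τ)))) volume)
    {ι : Type*} (l : Filter ι) (τ : ι → ℝ) :
    Tendsto (fun j => semiW d f h1 h0 hs ht hm (τ j)) l (𝓝 0) ↔
      Tendsto (fun j => UD (fun t => ENNReal.ofReal (d (f t) (f (t + τ j))))) l (𝓝 0) := by
  have hfin : ∀ j, UD (fun t => ENNReal.ofReal (d (f t) (f (t + τ j)))) ≠ ⊤ := fun j =>
    ((UD_le_one fun t => ENNReal.ofReal_le_one.2 (h1 _ _)).trans_lt ENNReal.one_lt_top).ne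
  rw [← ENNReal.tendsto_toReal_iff hfin ENNReal.zero_ne_top, ENNReal.toReal_zero]
  simp only [← weylDinf_one]
  rfl

theorem WMod_eq {α : Type*} (d : α → α → ℝ) (f : ℝ → α)
    (h1 : ∀ x y, d x y ≤ 1) (h0 : ∀ x, d x x = 0) (hs : ∀ x y, d x y = d y x)
    (ht : ∀ x y z, d x z ≤ d x y + d y z)
    (hm : ∀ τ, AEMeasurable (fun t => ENNReal.ofReal (d (f t) (f (t + τ)))) volume) :
    WMod d f = (SMod (semiW d f h1 h0 hs ht hm) : Set ℝ) := by
  ext lam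
  change (∀ τ : ℕ → ℝ, _ → _) ↔ (∀ τ : ℕ → ℝ, _ → _)
  refine forall_congr' fun τ => ?_
  rw [semiW_tendsto]
  simp only [weylDinf_one]
  rfl

theorem min_tri {a b c : ℝ} (h : a ≤ b + c) (hb : 0 ≤ b) (hc : 0 ≤ c) : min 1 a ≤ min 1 b + min 1 c := by
  rcases min_cases 1 a with h1 | h1 <;> rcases min_cases 1 b with h2 | h2 <;> rcases min_cases 1 c with h3 | h3 <;> linarith

end PD6

/-- **The module of a Weyl a.p. measure-valued function.**
For `μ[·;·] ∈ W₁(ℝ, 𝓜(U))`,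
`Mod μ[·;·] = Σ_{𝓕 ∈ C_b(U,ℝ)} Mod ∫_U 𝓕(x) μ[dx;·]`, i.e. the module of `μ[·;·]`
equals the additive group generated by the union of the modules of the Weyl a.p. real
functions `t ↦ ∫_U 𝓕(x) μ[dx;t]`, `𝓕 ∈ C_b(U,ℝ)`. -/
theorem weyl_ap_measure_module {U : Type*} [MetricSpace U] [CompleteSpace U]
    [TopologicalSpace.SeparableSpace U] [MeasurableSpace U] [BorelSpace U] (x₀ : U)
    (μ : ℝ → ProbabilityMeasure U)
    (hμ : MemWp lpDist 1
      (⟨MeasureTheory.Measure.dirac x₀, inferInstance⟩ : ProbabilityMeasure U) μ) :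
    WMod (fun μ' ν' => min 1 (lpDist μ' ν')) μ =
      (AddSubgroup.closure (⋃ 𝓕 : BoundedContinuousFunction U ℝ,
        WMod bdist (fun t => ∫ x, 𝓕 x ∂(μ t : Measure U))) : AddSubgroup ℝ) := by
  haveI : Nonempty U := ⟨x₀⟩
  have lp0 : ∀ P Q : ProbabilityMeasure U, 0 ≤ lpDist P Q := fun P Q => ENNReal.toReal_nonneg
  have a1 : ∀ P Q : ProbabilityMeasure U, min 1 (lpDist P Q) ≤ 1 := fun P Q => min_le_left _ _
  have a0 : ∀ P : ProbabilityMeasure U, min 1 (lpDist P P) = 0 := fun P => by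
    simp [lpDist, levyProkhorovDist_self]
  have as : ∀ P Q : ProbabilityMeasure U, min 1 (lpDist P Q) = min 1 (lpDist Q P) := fun P Q => by
    simp only [lpDist, levyProkhorovDist_comm (P : Measure U) (Q : Measure U)]
  have hatri : ∀ P Q R : ProbabilityMeasure U, min 1 (lpDist P R) ≤ min 1 (lpDist P Q) + min 1 (lpDist Q R) :=
    fun P Q R => min_tri (levyProkhorovDist_triangle _ _ _) (lp0 _ _) (lp0 _ _)
  have am : ∀ τ, AEMeasurable (fun t => ENNReal.ofReal (min 1 (lpDist (μ t) (μ (t + τ))))) volume :=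
    fun τ => (aemeasurable_const.min (aem_lpDist hμ.1.1 τ)).ennreal_ofReal
  have b1 : ∀ x y : ℝ, bdist x y ≤ 1 := fun x y => min_le_left _ _
  have b0 : ∀ x : ℝ, bdist x x = 0 := fun x => by simp [bdist]
  have bs : ∀ x y : ℝ, bdist x y = bdist y x := fun x y => by simp [bdist, dist_comm]
  have bt : ∀ x y z : ℝ, bdist x z ≤ bdist x y + bdist y z :=
    fun x y z => min_tri (dist_triangle _ _ _) dist_nonneg dist_nonneg
  have bm : ∀ F : BoundedContinuousFunction U ℝ, ∀ τ, AEMeasurable (fun t => ENNReal.ofReal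
      (bdist (∫ x, F x ∂(μ t : Measure U)) (∫ x, F x ∂(μ (t + τ) : Measure U)))) volume :=
    fun F τ => aem_eF hμ.1.1 F τ
  rw [WMod_eq (fun μ' ν' => min 1 (lpDist μ' ν')) μ a1 a0 as hatri am]
  have hb : ∀ F : BoundedContinuousFunction U ℝ, WMod bdist (fun t => ∫ x, F x ∂(μ t : Measure U)) =
      (SMod (semiW bdist (fun t => ∫ x, F x ∂(μ t : Measure U)) b1 b0 bs bt (bm F)) : Set ℝ) :=
    fun F => WMod_eq _ _ _ _ _ _ _
  simp only [hb]
  set N := semiW (fun μ' ν' => min 1 (lpDist μ' ν')) μ a1 a0 as hatri am with hN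
  have hNt : Tendsto (fun τ : ℝ => N τ) (𝓝 0) (𝓝 0) := by
    rw [hN, semiW_tendsto]
    exact cont_M hμ
  congr 1
  refine abstract_mod N _ ?_ ?_ ?_ ?_
  · intro ε hε
    obtain ⟨l, hl, a, ha, hd⟩ := hμ.2 (ε / 4) (by positivity)
    obtain ⟨η, hη, hηN⟩ := Metric.eventually_nhds_iff.1 (hNt.eventually_lt_const (u := ε / 2) (by positivity))
    obtain ⟨A, hAs, hAf, hA⟩ := (isCompact_Icc (a := (0:ℝ)) (b := a)).finite_cover_balls hη
    refine ⟨A, hAf, fun s => ?_⟩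
    obtain ⟨σ, hσ, hσ'⟩ := hd (s - a)
    have hσ2 : weylD lpDist 1 l μ (fun t => μ (t + σ)) < ENNReal.ofReal (ε / 4) := hσ'
    rw [weylD_one] at hσ2
    have hNσ : N σ ≤ ε / 2 := by
      change (weylDinf _ 1 μ (fun t => μ (t + σ))).toReal ≤ ε / 2
      rw [weylDinf_one]
      refine ENNReal.toReal_le_of_le_ofReal (by positivity) ?_
      have h1 := UD_tile hl (lint_le_of_UA hl hσ2.le)
      refine (UD_mono fun t => ENNReal.ofReal_le_ofReal (min_le_right _ _)).trans (h1.trans ?_)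
      rw [show ε / 2 = 2 * (ε / 4) by ring, ENNReal.ofReal_mul (by norm_num)]
      simp
    have hmem : s - σ ∈ Set.Icc 0 a := ⟨by linarith [hσ.2], by linarith [hσ.1]⟩
    obtain ⟨b, hbA, hbd⟩ : ∃ b ∈ A, dist (s - σ) b < η := by simpa using hA hmem
    refine ⟨b, hbA, ?_⟩
    have h2 : N (s - σ - b) < ε / 2 := hηN (by rw [Real.dist_eq, sub_zero, ← Real.dist_eq]; exact hbd)
    have h3 := map_add_le_add N σ (s - σ - b)
    rw [show σ + (s - σ - b) = s - b by ring] at h3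
    linarith
  · intro F
    have := (semiW_tendsto bdist (fun t => ∫ x, F x ∂(μ t : Measure U)) b1 b0 bs bt (bm F) (𝓝 0) (fun τ => τ)).2
      (one_tendsto hμ (𝓝 0) (fun τ => τ) (cont_M hμ) F)
    exact this
  · intro F τ hτ
    rw [hN, semiW_tendsto] at hτ
    rw [semiW_tendsto]
    exact one_tendsto hμ atTop τ hτ F
  · intro τ hτ
    rw [hN, semiW_tendsto]
    refine two_tendsto hμ atTop τ fun F _ => ?_
    have := hτ F
    rw [semiW_tendsto] at this
    exact this
end

section
/- Let (U,ρ) be a complete metric space and let p ≥ 1. Then W_p(ℝ,U) = W(ℝ,U) ∩ M*_p(ℝ,U); that is, a function f ∈ M_p(ℝ,U) is Weyl almost periodic of order p if and only if f is Weyl almost periodic with respect to the bounded metric ρ' and f satisfies the M*_p uniform integrability condition. -/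
open MeasureTheory Filter Topology TopologicalSpace
open scoped ENNReal Pointwise

lemma weylaux_avg {l : ℝ} (hl : 0 < l) (X c : ℝ≥0∞) :
    ENNReal.ofReal (1 / l) * X ≤ c ↔ X ≤ c * ENNReal.ofReal l := by
  have h0 : ENNReal.ofReal l ≠ 0 := by simpa using hl
  have : ENNReal.ofReal (1 / l) * X = X / ENNReal.ofReal l := by
    rw [one_div, ENNReal.ofReal_inv_of_pos hl, mul_comm, div_eq_mul_inv]
  rw [this, ENNReal.div_le_iff_le_mul (Or.inl h0) (Or.inl ENNReal.ofReal_ne_top)]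

lemma weylaux_of_lt {α : Type*} {d : α → α → ℝ} {p l ε : ℝ} {f g : ℝ → α} (hp : 1 ≤ p)
    (hl : 0 < l) (hε : 0 < ε) (h : weylD d p l f g < ENNReal.ofReal ε) (ξ : ℝ) :
    ∫⁻ t in Set.Icc ξ (ξ + l), ENNReal.ofReal (d (f t) (g t) ^ p)
      ≤ ENNReal.ofReal (ε ^ p) * ENNReal.ofReal l := by
  unfold weylD at h
  rw [one_div p, ENNReal.rpow_inv_lt_iff (by linarith),
    ENNReal.ofReal_rpow_of_nonneg hε.le (by linarith)] at h
  rw [← weylaux_avg hl]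
  exact (le_iSup (fun ξ : ℝ => ENNReal.ofReal (1 / l) *
      ∫⁻ t in Set.Icc ξ (ξ + l), ENNReal.ofReal (d (f t) (g t) ^ p)) ξ).trans h.le

lemma weylaux_lt {α : Type*} {d : α → α → ℝ} {p l ε c : ℝ} {f g : ℝ → α} (hp : 1 ≤ p)
    (hl : 0 < l) (hε : 0 < ε) (hc : c < ε ^ p)
    (h : ∀ ξ : ℝ, ∫⁻ t in Set.Icc ξ (ξ + l), ENNReal.ofReal (d (f t) (g t) ^ p)
      ≤ ENNReal.ofReal c * ENNReal.ofReal l) :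
    weylD d p l f g < ENNReal.ofReal ε := by
  unfold weylD
  rw [one_div p, ENNReal.rpow_inv_lt_iff (by linarith),
    ENNReal.ofReal_rpow_of_nonneg hε.le (by linarith)]
  refine lt_of_le_of_lt (iSup_le fun ξ => (weylaux_avg hl _ _).2 (h ξ)) ?_
  exact (ENNReal.ofReal_lt_ofReal_iff (by positivity)).2 hc

lemma weylaux_split (F : ℝ → ℝ≥0∞) (ξ a b : ℝ) (ha : 0 ≤ a) (hb : 0 ≤ b) :
    ∫⁻ t in Set.Icc ξ (ξ + a + b), F t
      = (∫⁻ t in Set.Icc ξ (ξ + a), F t) + ∫⁻ t in Set.Icc (ξ + a) (ξ + a + b), F t := by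
  have e : Set.Icc ξ (ξ + a + b) = Set.Icc ξ (ξ + a) ∪ Set.Ioc (ξ + a) (ξ + a + b) := by
    rw [Set.Icc_union_Ioc_eq_Icc] <;> linarith
  rw [e, lintegral_union measurableSet_Ioc]
  · congr 1
    exact setLIntegral_congr Ioc_ae_eq_Icc
  · rw [Set.disjoint_left]
    intro x hx hy
    exact absurd hx.2 (not_le.2 hy.1)

lemma weylaux_block (F G : ℝ → ℝ≥0∞) {l : ℝ} (hl : 0 < l)
    (H : ∀ ξ : ℝ, ∫⁻ t in Set.Icc ξ (ξ + l), F t ≤ ∫⁻ t in Set.Icc ξ (ξ + l), G t)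
    (n : ℕ) (ξ : ℝ) :
    ∫⁻ t in Set.Icc ξ (ξ + n * l), F t ≤ ∫⁻ t in Set.Icc ξ (ξ + n * l), G t := by
  induction n with
  | zero => simp
  | succ n ih =>
    have e : ξ + ((n + 1 : ℕ) : ℝ) * l = ξ + n * l + l := by push_cast; ring
    rw [e, weylaux_split F _ _ _ (by positivity) hl.le, weylaux_split G _ _ _ (by positivity) hl.le]
    exact add_le_add ih (H _)

lemma weylaux_const (c : ℝ≥0∞) (ξ l : ℝ) :
    ∫⁻ _ in Set.Icc ξ (ξ + l), c = c * ENNReal.ofReal l := by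
  simp

lemma weylaux_block_const (F : ℝ → ℝ≥0∞) (c : ℝ≥0∞) {l : ℝ} (hl : 0 < l)
    (H : ∀ ξ : ℝ, ∫⁻ t in Set.Icc ξ (ξ + l), F t ≤ c * ENNReal.ofReal l)
    (n : ℕ) (ξ : ℝ) :
    ∫⁻ t in Set.Icc ξ (ξ + n * l), F t ≤ c * ENNReal.ofReal (n * l) := by
  rw [← weylaux_const c ξ (n * l)]
  refine weylaux_block F (fun _ => c) hl (fun ξ => ?_) n ξ
  rw [weylaux_const]; exact H ξ

/-- cover a length `L ≥ l` by blocks. -/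
lemma weylaux_ceil {l L : ℝ} (hl : 0 < l) (hL : l ≤ L) :
    ∃ n : ℕ, L ≤ n * l ∧ n * l ≤ 2 * L := by
  refine ⟨⌈L / l⌉₊, ?_, ?_⟩
  · have := Nat.le_ceil (L / l)
    rwa [div_le_iff₀ hl] at this
  · have := (Nat.ceil_lt_add_one (a := L / l) (div_nonneg (by linarith) hl.le)).le
    have h2 := mul_le_mul_of_nonneg_right this hl.le
    have h3 : (L / l + 1) * l = L + l := by field_simp
    linarith

lemma weylaux_cap (F : ℝ → ℝ≥0∞) (c : ℝ≥0∞) {l : ℝ} (hl : 0 < l)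
    (H : ∀ ξ : ℝ, ∫⁻ t in Set.Icc ξ (ξ + l), F t ≤ c * ENNReal.ofReal l)
    {L : ℝ} (hL : l ≤ L) (ξ : ℝ) :
    ∫⁻ t in Set.Icc ξ (ξ + L), F t ≤ c * ENNReal.ofReal (2 * L) := by
  obtain ⟨n, h1, h2⟩ := weylaux_ceil hl hL
  calc _ ≤ ∫⁻ t in Set.Icc ξ (ξ + n * l), F t :=
        lintegral_mono_set (Set.Icc_subset_Icc_right (by linarith))
    _ ≤ c * ENNReal.ofReal (n * l) := weylaux_block_const F c hl H n ξ
    _ ≤ _ := by gcongr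

lemma weylaux_shift (F : ℝ → ℝ≥0∞) (ξ l τ : ℝ) :
    ∫⁻ t in Set.Icc ξ (ξ + l), F (t + τ) = ∫⁻ t in Set.Icc (ξ + τ) (ξ + τ + l), F t := by
  rw [← lintegral_indicator measurableSet_Icc, ← lintegral_indicator measurableSet_Icc,
    ← lintegral_add_right_eq_self ((Set.Icc (ξ + τ) (ξ + τ + l)).indicator _) τ]
  congr 1
  ext t
  simp only [Set.indicator, Set.mem_Icc]
  congr 1
  apply propext
  constructor <;> rintro ⟨h1, h2⟩ <;> constructor <;> linarith

lemma weylaux_tail (μ : Measure ℝ) (h : ℝ → ℝ≥0∞) (hm : AEMeasurable h μ)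
    (hfin : ∫⁻ t, h t ∂μ ≠ ⊤) {e : ℝ} (he : 0 < e) :
    ∃ R : ℝ, 0 < R ∧ ∫⁻ t, {s | ENNReal.ofReal R ≤ h s}.indicator h t ∂μ ≤ ENNReal.ofReal e := by
  obtain ⟨δ, hδ, H⟩ := exists_pos_setLIntegral_lt_of_measure_lt hfin
    (ε := ENNReal.ofReal e) (by simpa using he)
  have ht : Tendsto (fun R : ℝ => (∫⁻ t, h t ∂μ) / ENNReal.ofReal R) atTop (𝓝 0) := by
    have := ENNReal.Tendsto.const_div (a := ∫⁻ t, h t ∂μ)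
      ENNReal.tendsto_ofReal_atTop (Or.inr hfin)
    simpa using this
  obtain ⟨R, hR, hR0⟩ := ((ht.eventually_lt_const hδ).and (eventually_gt_atTop 0)).exists
  refine ⟨R, hR0, (lintegral_indicator_le _ _).trans (H _ ?_).le⟩
  refine lt_of_le_of_lt ?_ hR
  exact meas_ge_le_lintegral_div hm (by simpa using hR0) ENNReal.ofReal_ne_top

lemma weylaux_rpow_add {p x y : ℝ} (hp : 1 ≤ p) (hx : 0 ≤ x) (hy : 0 ≤ y) :
    (x + y) ^ p ≤ 2 ^ p * max (x ^ p) (y ^ p) := by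
  rcases le_total x y with h | h
  · calc (x + y) ^ p ≤ (2 * y) ^ p :=
          Real.rpow_le_rpow (by positivity) (by linarith) (by linarith)
      _ = 2 ^ p * y ^ p := Real.mul_rpow (by norm_num) hy
      _ ≤ _ := by gcongr; exact le_max_right _ _
  · calc (x + y) ^ p ≤ (2 * x) ^ p :=
          Real.rpow_le_rpow (by positivity) (by linarith) (by linarith)
      _ = 2 ^ p * x ^ p := Real.mul_rpow (by norm_num) hx
      _ ≤ _ := by gcongr; exact le_max_left _ _

lemma weylaux_rpow_add_enn {p x y : ℝ} (hp : 1 ≤ p) (hx : 0 ≤ x) (hy : 0 ≤ y) :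
    ENNReal.ofReal ((x + y) ^ p)
      ≤ ENNReal.ofReal (2 ^ p) * max (ENNReal.ofReal (x ^ p)) (ENNReal.ofReal (y ^ p)) := by
  rw [← ENNReal.ofReal_max, ← ENNReal.ofReal_mul (by positivity)]
  exact ENNReal.ofReal_le_ofReal (weylaux_rpow_add hp hx hy)

/-- pointwise bound for the reverse direction -/
lemma weylaux_pt {U : Type*} [MetricSpace U] (x₀ a b : U) {p R : ℝ} (hp : 1 ≤ p) (hR : 1 ≤ R)
    (A B : ℝ≥0∞)
    (hA : ENNReal.ofReal R ≤ ENNReal.ofReal (dist a x₀ ^ p) → ENNReal.ofReal (dist a x₀ ^ p) ≤ A)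
    (hB : ENNReal.ofReal R ≤ ENNReal.ofReal (dist b x₀ ^ p) → ENNReal.ofReal (dist b x₀ ^ p) ≤ B) :
    ENNReal.ofReal (dist a b ^ p) ≤ ENNReal.ofReal (2 ^ p * R) * ENNReal.ofReal (bdist a b ^ (1 : ℝ))
      + ENNReal.ofReal (2 ^ p) * (A + B) := by
  have h2 : (1 : ℝ) ≤ 2 ^ p := Real.one_le_rpow (by norm_num) (by linarith)
  have htri : ENNReal.ofReal (dist a b ^ p) ≤ ENNReal.ofReal (2 ^ p) *
      max (ENNReal.ofReal (dist a x₀ ^ p)) (ENNReal.ofReal (dist b x₀ ^ p)) := by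
    refine le_trans (ENNReal.ofReal_le_ofReal ?_)
      (weylaux_rpow_add_enn hp (dist_nonneg (x := a) (y := x₀)) (dist_nonneg (x := b) (y := x₀)))
    exact Real.rpow_le_rpow dist_nonneg (dist_triangle_right _ _ _) (by linarith)
  by_cases hbig : ENNReal.ofReal R ≤
      max (ENNReal.ofReal (dist a x₀ ^ p)) (ENNReal.ofReal (dist b x₀ ^ p))
  · refine htri.trans (le_trans ?_ le_add_self)
    gcongr
    rcases le_total (ENNReal.ofReal (dist a x₀ ^ p)) (ENNReal.ofReal (dist b x₀ ^ p)) with h | h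
    · rw [max_eq_right h] at hbig ⊢
      exact (hB hbig).trans le_add_self
    · rw [max_eq_left h] at hbig ⊢
      exact (hA hbig).trans le_self_add
  · refine le_trans ?_ le_self_add
    rw [Real.rpow_one]
    by_cases h1 : 1 ≤ dist a b
    · have : bdist a b = 1 := by simp [bdist, h1]
      rw [this, ENNReal.ofReal_one, mul_one, ENNReal.ofReal_mul (by positivity)]
      refine htri.trans ?_
      gcongr
      exact (not_le.1 hbig).le
    · have : bdist a b = dist a b := by simp [bdist, (not_le.1 h1).le]
      rw [this, ← ENNReal.ofReal_mul (by positivity)]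
      apply ENNReal.ofReal_le_ofReal
      have h3 : dist a b ^ p ≤ dist a b ^ (1 : ℝ) :=
        Real.rpow_le_rpow_of_exponent_ge' dist_nonneg (not_le.1 h1).le (by norm_num) hp
      rw [Real.rpow_one] at h3
      have h4 : 1 ≤ 2 ^ p * R := by nlinarith
      nlinarith [dist_nonneg (x := a) (y := b)]

/-- pointwise bound of the truncated distance by the `p`-th power. -/
lemma weylaux_trunc {U : Type*} [MetricSpace U] (a b : U) {p η : ℝ} (hp : 1 ≤ p) (hη : 0 < η) :
    ENNReal.ofReal (bdist a b ^ (1 : ℝ)) ≤ ENNReal.ofReal η +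
      ENNReal.ofReal ((η ^ p)⁻¹) * ENNReal.ofReal (dist a b ^ p) := by
  have hηp : 0 < η ^ p := Real.rpow_pos_of_pos hη p
  have hd : 0 ≤ dist a b ^ p := Real.rpow_nonneg dist_nonneg p
  rw [← ENNReal.ofReal_mul (by positivity), ← ENNReal.ofReal_add hη.le (by positivity),
    Real.rpow_one]
  apply ENNReal.ofReal_le_ofReal
  rcases le_total (dist a b) η with h | h
  · have : bdist a b ≤ dist a b := min_le_right _ _
    have : 0 ≤ (η ^ p)⁻¹ * dist a b ^ p := by positivity
    linarith
  · have h1 : bdist a b ≤ 1 := min_le_left _ _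
    have h2 : η ^ p ≤ dist a b ^ p := Real.rpow_le_rpow hη.le h (by linarith)
    have h3 : 1 ≤ (η ^ p)⁻¹ * dist a b ^ p := by
      rw [inv_mul_eq_div, one_le_div hηp]; exact h2
    linarith

lemma weylaux_meas {U : Type*} [MetricSpace U] {p : ℝ} {f g : ℝ → U}
    (hf : AEStronglyMeasurable f volume) (hg : AEStronglyMeasurable g volume) :
    AEMeasurable (fun t => ENNReal.ofReal (dist (f t) (g t) ^ p)) volume :=
  ((hf.dist hg).aemeasurable.pow_const p).ennreal_ofReal

lemma weylaux_meas_shift {U : Type*} [MetricSpace U] {f : ℝ → U}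
    (hf : AEStronglyMeasurable f volume) (τ : ℝ) :
    AEStronglyMeasurable (fun t => f (t + τ)) volume :=
  hf.comp_quasiMeasurePreserving (measurePreserving_add_right volume τ).quasiMeasurePreserving

lemma weylaux_rev {U : Type*} [MetricSpace U] (x₀ : U)
    (p : ℝ) (hp : 1 ≤ p) (f : ℝ → U) (hW : MemWp bdist 1 x₀ f) (hS : MemMpStar dist p x₀ f) :
    MemWp dist p x₀ f := by
  obtain ⟨hM, hS⟩ := hS
  refine ⟨hM, fun ε hε => ?_⟩
  obtain ⟨hf, C, hC⟩ := hM
  have h2 : (0 : ℝ) < 2 ^ p := by positivity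
  have hεp : 0 < ε ^ p := Real.rpow_pos_of_pos hε p
  set h : ℝ → ℝ≥0∞ := fun t => ENNReal.ofReal (dist (f t) x₀ ^ p) with hh
  have hm : AEMeasurable h volume := weylaux_meas hf aestronglyMeasurable_const
  set e1 := ε ^ p / (8 * 2 ^ p) with he1
  have he1p : 0 < e1 := by positivity
  obtain ⟨δ, hδ, H⟩ := hS e1 he1p
  set Cb := max C 1 with hCb
  have hCb1 : 1 ≤ Cb := le_max_right _ _
  set R := max 1 (4 * Cb / δ) with hR
  have hR1 : 1 ≤ R := le_max_left _ _
  have hR0 : 0 < R := by linarith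
  set S : Set ℝ := {s | ENNReal.ofReal R ≤ h s} with hSdef
  set T := toMeasurable volume S with hT
  have hTm : MeasurableSet T := measurableSet_toMeasurable _ _
  have hST : S ⊆ T := subset_toMeasurable _ _
  have hcap : ∀ L : ℝ, 1 ≤ L → ∀ ξ, ∫⁻ t in Set.Icc ξ (ξ + L), h t
      ≤ ENNReal.ofReal Cb * ENNReal.ofReal (2 * L) := by
    intro L hL ξ
    refine weylaux_cap h _ one_pos (fun ξ => ?_) hL ξ
    rw [ENNReal.ofReal_one, mul_one]
    exact (hC ξ).trans (ENNReal.ofReal_le_ofReal (le_max_left _ _))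
  have hk : kappaW T < ENNReal.ofReal δ := by
    refine lt_of_le_of_lt (b := ENNReal.ofReal (δ / 2)) ?_
      ((ENNReal.ofReal_lt_ofReal_iff hδ).2 (by linarith))
    refine limsup_le_of_le (by isBoundedDefault) ?_
    filter_upwards [eventually_ge_atTop 1] with L hL
    refine iSup_le fun ξ => ?_
    have hL0 : 0 < L := by linarith
    rw [weylaux_avg hL0, Set.inter_comm, hT,
      Measure.measure_toMeasurable_inter_of_sFinite measurableSet_Icc]
    have hmk := mul_meas_ge_le_lintegral₀ (hm.restrict (s := Set.Icc ξ (ξ + L))) (ENNReal.ofReal R)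
    rw [Measure.restrict_apply₀' measurableSet_Icc.nullMeasurableSet] at hmk
    have hmk2 := hmk.trans (hcap L hL ξ)
    have hR00 : ENNReal.ofReal R ≠ 0 := by simpa using hR0
    rw [← ENNReal.mul_le_mul_iff_right hR00 ENNReal.ofReal_ne_top]
    refine hmk2.trans ?_
    rw [← ENNReal.ofReal_mul (by positivity), ← ENNReal.ofReal_mul (by positivity),
      ← ENNReal.ofReal_mul (by positivity)]
    apply ENNReal.ofReal_le_ofReal
    have : 4 * Cb / δ ≤ R := le_max_right _ _
    rw [div_le_iff₀ hδ] at this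
    nlinarith
  have hlim := eventually_lt_of_limsup_lt (H T hTm hk)
  obtain ⟨L1, hL1⟩ := eventually_atTop.1 hlim
  set K := 2 ^ p * R with hK
  have hKp : 0 < K := by positivity
  set e2 := ε ^ p / (4 * K) with he2
  have he2p : 0 < e2 := by positivity
  obtain ⟨l0, hl0, a, ha, hrd⟩ := hW.2 e2 he2p
  obtain ⟨n, hn⟩ := exists_nat_ge (max L1 1 / l0)
  rw [div_le_iff₀ hl0] at hn
  have hn1 : 1 ≤ n * l0 := (le_max_right _ _).trans hn
  have hn2 : L1 ≤ n * l0 := (le_max_left _ _).trans hn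
  refine ⟨n * l0, by linarith, a, ha, fun ξ => ?_⟩
  obtain ⟨τ, hτ, hτ2⟩ := hrd ξ
  refine ⟨τ, hτ, ?_⟩
  have hl : 0 < n * l0 := by linarith
  have hper : ∀ ξ, ∫⁻ t in Set.Icc ξ (ξ + n * l0), ENNReal.ofReal (bdist (f t) (f (t + τ)) ^ (1:ℝ))
      ≤ ENNReal.ofReal e2 * ENNReal.ofReal (n * l0) := by
    intro ξ
    refine weylaux_block_const _ _ hl0 (fun ξ => ?_) n ξ
    have := weylaux_of_lt le_rfl hl0 he2p hτ2 ξ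
    rwa [Real.rpow_one] at this
  have htail : ∀ ξ, ∫⁻ t in Set.Icc ξ (ξ + n * l0), T.indicator h t
      ≤ ENNReal.ofReal e1 * ENNReal.ofReal (n * l0) := by
    intro ξ
    rw [← weylaux_avg hl, setLIntegral_indicator hTm, Set.inter_comm]
    refine le_trans ?_ (hL1 _ hn2).le
    exact le_iSup (fun ξ : ℝ => ENNReal.ofReal (1 / (n * l0)) *
      ∫⁻ t in Set.Icc ξ (ξ + n * l0) ∩ T, ENNReal.ofReal (dist (f t) x₀ ^ p)) ξ
  have hTi : AEMeasurable (T.indicator h) volume := hm.indicator hTm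
  have hTi2 : AEMeasurable (fun t => T.indicator h (t + τ)) volume :=
    hTi.comp_quasiMeasurePreserving (measurePreserving_add_right volume τ).quasiMeasurePreserving
  have hTi3 : AEMeasurable (fun t => ENNReal.ofReal (2 ^ p) *
      (T.indicator h t + T.indicator h (t + τ))) volume := (hTi.add hTi2).const_mul _
  refine weylaux_lt (c := K * e2 + 2 ^ p * (e1 + e1)) hp hl hε ?_ (fun ξ => ?_)
  · have : K * e2 + 2 ^ p * (e1 + e1) = ε ^ p / 2 := by
      rw [he1, he2]; field_simp; ring
    linarith
  · calc _ ≤ ∫⁻ t in Set.Icc ξ (ξ + n * l0),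
          (ENNReal.ofReal K * ENNReal.ofReal (bdist (f t) (f (t + τ)) ^ (1 : ℝ))
          + ENNReal.ofReal (2 ^ p) * (T.indicator h t + T.indicator h (t + τ))) := by
          refine lintegral_mono fun t => ?_
          refine weylaux_pt x₀ _ _ hp hR1 _ _ (fun hA => ?_) (fun hB => ?_)
          · rw [Set.indicator_of_mem (hST hA)]
          · rw [Set.indicator_of_mem (hST hB)]
      _ = ENNReal.ofReal K * (∫⁻ t in Set.Icc ξ (ξ + n * l0),
            ENNReal.ofReal (bdist (f t) (f (t + τ)) ^ (1 : ℝ)))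
          + ENNReal.ofReal (2 ^ p) * ((∫⁻ t in Set.Icc ξ (ξ + n * l0), T.indicator h t)
            + ∫⁻ t in Set.Icc ξ (ξ + n * l0), T.indicator h (t + τ)) := by
          rw [lintegral_add_right' _ hTi3.restrict,
            lintegral_const_mul' _ _ ENNReal.ofReal_ne_top,
            lintegral_const_mul' _ _ ENNReal.ofReal_ne_top,
            lintegral_add_left' hTi.restrict]
      _ ≤ ENNReal.ofReal K * (ENNReal.ofReal e2 * ENNReal.ofReal (n * l0))
          + ENNReal.ofReal (2 ^ p) * (ENNReal.ofReal e1 * ENNReal.ofReal (n * l0)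
            + ENNReal.ofReal e1 * ENNReal.ofReal (n * l0)) := by
          rw [weylaux_shift (T.indicator h)]
          gcongr
          · exact hper ξ
          · exact htail ξ
          · exact htail (ξ + τ)
      _ = _ := by
          rw [ENNReal.ofReal_add (by positivity) (by positivity),
            ENNReal.ofReal_mul (p := K) (by positivity),
            ENNReal.ofReal_mul (p := 2 ^ p) (q := e1 + e1) (by positivity),
            ENNReal.ofReal_add he1p.le he1p.le]
          ring

lemma weylaux_fwd1 {U : Type*} [MetricSpace U] (x₀ : U)
    (p : ℝ) (hp : 1 ≤ p) (f : ℝ → U) (hW : MemWp dist p x₀ f) : MemWp bdist 1 x₀ f := by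
  refine ⟨⟨hW.1.1, 1, fun ξ => ?_⟩, fun ε hε => ?_⟩
  · calc _ ≤ ∫⁻ t in Set.Icc ξ (ξ + 1), ENNReal.ofReal 1 := by
          refine lintegral_mono fun t => ENNReal.ofReal_le_ofReal ?_
          rw [Real.rpow_one]; exact min_le_left _ _
      _ ≤ _ := by rw [weylaux_const]; simp
  · set η := ε / 4 with hη
    have hη0 : 0 < η := by positivity
    have hηp : 0 < η ^ p := by positivity
    set e := (η * η ^ p) ^ (1 / p) with he
    have he0 : 0 < e := by positivity
    have hep : e ^ p = η * η ^ p := by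
      rw [he, ← Real.rpow_mul (by positivity), one_div_mul_cancel (by linarith), Real.rpow_one]
    obtain ⟨l, hl, a, ha, hrd⟩ := hW.2 e he0
    refine ⟨l, hl, a, ha, fun ξ => ?_⟩
    obtain ⟨τ, hτ, hτ2⟩ := hrd ξ
    refine ⟨τ, hτ, weylaux_lt (c := η + η) le_rfl hl hε (by rw [Real.rpow_one]; linarith)
      (fun ξ => ?_)⟩
    calc _ ≤ ∫⁻ t in Set.Icc ξ (ξ + l), (ENNReal.ofReal η +
          ENNReal.ofReal ((η ^ p)⁻¹) * ENNReal.ofReal (dist (f t) (f (t + τ)) ^ p)) :=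
          lintegral_mono fun t => weylaux_trunc _ _ hp hη0
      _ = ENNReal.ofReal η * ENNReal.ofReal l + ENNReal.ofReal ((η ^ p)⁻¹) *
          ∫⁻ t in Set.Icc ξ (ξ + l), ENNReal.ofReal (dist (f t) (f (t + τ)) ^ p) := by
          rw [lintegral_add_left measurable_const, weylaux_const,
            lintegral_const_mul' _ _ ENNReal.ofReal_ne_top]
      _ ≤ ENNReal.ofReal η * ENNReal.ofReal l + ENNReal.ofReal ((η ^ p)⁻¹) *
          (ENNReal.ofReal (e ^ p) * ENNReal.ofReal l) := by
          gcongr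
          exact weylaux_of_lt hp hl he0 hτ2 ξ
      _ = _ := by
          rw [hep, ENNReal.ofReal_add hη0.le hη0.le, ← mul_assoc,
            ← ENNReal.ofReal_mul (p := (η ^ p)⁻¹) (by positivity),
            show (η ^ p)⁻¹ * (η * η ^ p) = η by field_simp]
          ring

lemma weylaux_fwd2 {U : Type*} [MetricSpace U] (x₀ : U)
    (p : ℝ) (hp : 1 ≤ p) (f : ℝ → U) (hW : MemWp dist p x₀ f) : MemMpStar dist p x₀ f := by
  refine ⟨hW.1, fun ε hε => ?_⟩
  obtain ⟨⟨hf, C, hC⟩, hW⟩ := hW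
  have h2 : (0 : ℝ) < 2 ^ p := by positivity
  set h : ℝ → ℝ≥0∞ := fun t => ENNReal.ofReal (dist (f t) x₀ ^ p) with hh
  have hm : AEMeasurable h volume := weylaux_meas hf aestronglyMeasurable_const
  set e1 := ε / (16 * 2 ^ p) with he1
  have he1p : 0 < e1 := by positivity
  set e := e1 ^ (1 / p) with he
  have he0 : 0 < e := by positivity
  have hep : e ^ p = e1 := by
    rw [he, ← Real.rpow_mul (by positivity), one_div_mul_cancel (by linarith), Real.rpow_one]
  obtain ⟨l, hl, a, ha, hrd⟩ := hW e he0
  have hfin : ∫⁻ t in Set.Icc 0 (a + l), h t ≠ ⊤ := by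
    obtain ⟨n, hn⟩ := exists_nat_ge (a + l)
    refine ne_top_of_le_ne_top (ENNReal.mul_ne_top (ENNReal.ofReal_ne_top (r := C))
      (ENNReal.ofReal_ne_top (r := n * 1))) ?_
    refine le_trans (lintegral_mono_set (Set.Icc_subset_Icc_right ?_))
      (weylaux_block_const h (ENNReal.ofReal C) one_pos (fun ξ => ?_) n 0)
    · linarith
    · rw [ENNReal.ofReal_one, mul_one]; exact hC ξ
  obtain ⟨R, hR0, hR⟩ := weylaux_tail _ h hm.restrict hfin (mul_pos he1p hl)
  set S : Set ℝ := {s | ENNReal.ofReal R ≤ h s} with hSdef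
  set c1 := 2 ^ p * R with hc1
  have hc1p : 0 < c1 := by positivity
  set c0 := 2 ^ p * (e1 + e1) with hc0
  have hc0p : 0 < c0 := by positivity
  set δ := ε / (8 * c1) with hδ
  have hδp : 0 < δ := by positivity
  refine ⟨δ, hδp, fun T hTm hk => ?_⟩
  -- the estimate on one block
  have hblock : ∀ ξ, ∫⁻ t in Set.Icc ξ (ξ + l), T.indicator h t ≤ ∫⁻ t in Set.Icc ξ (ξ + l),
      (ENNReal.ofReal c0 + T.indicator (fun _ => ENNReal.ofReal c1) t) := by
    intro ξ
    obtain ⟨τ, ⟨hτ0, hτa⟩, hτ2⟩ := hrd (-ξ)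
    have hper := weylaux_of_lt hp hl he0 hτ2 ξ
    rw [hep] at hper
    have hmd : AEMeasurable (fun t => ENNReal.ofReal (dist (f t) (f (t + τ)) ^ p)) volume :=
      weylaux_meas hf (weylaux_meas_shift hf τ)
    have htail : ∫⁻ t in Set.Icc ξ (ξ + l), S.indicator h (t + τ)
        ≤ ENNReal.ofReal (e1 * l) := by
      rw [weylaux_shift (S.indicator h)]
      refine le_trans (lintegral_mono_set (Set.Icc_subset_Icc ?_ ?_)) hR <;> linarith
    calc _ ≤ ∫⁻ t in Set.Icc ξ (ξ + l), (T.indicator (fun _ => ENNReal.ofReal c1) t +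
          ENNReal.ofReal (2 ^ p) * (ENNReal.ofReal (dist (f t) (f (t + τ)) ^ p)
            + S.indicator h (t + τ))) := by
          refine lintegral_mono fun t => ?_
          by_cases ht : t ∈ T
          swap
          · simp [Set.indicator_of_notMem ht]
          simp only [Set.indicator_of_mem ht]
          have htri : h t ≤ ENNReal.ofReal (2 ^ p) *
              max (ENNReal.ofReal (dist (f t) (f (t + τ)) ^ p)) (h (t + τ)) := by
            refine le_trans (ENNReal.ofReal_le_ofReal ?_)
              (weylaux_rpow_add_enn hp dist_nonneg dist_nonneg)
            exact Real.rpow_le_rpow dist_nonneg (dist_triangle _ _ _) (by linarith)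
          have hs : h (t + τ) ≤ ENNReal.ofReal R + S.indicator h (t + τ) := by
            by_cases hs : t + τ ∈ S
            · rw [Set.indicator_of_mem hs]; exact le_add_self
            · rw [Set.indicator_of_notMem hs, add_zero]
              exact (not_le.1 hs).le
          refine htri.trans ?_
          rw [hc1, ENNReal.ofReal_mul h2.le, ← mul_add]
          gcongr
          refine max_le ?_ ?_
          · exact le_self_add.trans le_add_self
          · refine hs.trans ?_
            gcongr
            exact le_add_self
      _ = (∫⁻ t in Set.Icc ξ (ξ + l), T.indicator (fun _ => ENNReal.ofReal c1) t) +
          ENNReal.ofReal (2 ^ p) *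
            ((∫⁻ t in Set.Icc ξ (ξ + l), ENNReal.ofReal (dist (f t) (f (t + τ)) ^ p))
            + ∫⁻ t in Set.Icc ξ (ξ + l), S.indicator h (t + τ)) := by
          rw [lintegral_add_left (measurable_const.indicator hTm),
            lintegral_const_mul' _ _ ENNReal.ofReal_ne_top,
            lintegral_add_left' hmd.restrict]
      _ ≤ (∫⁻ t in Set.Icc ξ (ξ + l), T.indicator (fun _ => ENNReal.ofReal c1) t) +
          ENNReal.ofReal (2 ^ p) * (ENNReal.ofReal e1 * ENNReal.ofReal l
            + ENNReal.ofReal (e1 * l)) := by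
          gcongr
      _ = _ := by
          rw [lintegral_add_left measurable_const, weylaux_const, add_comm]
          congr 1
          rw [hc0, ENNReal.ofReal_mul h2.le, ENNReal.ofReal_add he1p.le he1p.le,
            ENNReal.ofReal_mul he1p.le]
          ring
  have hkev := eventually_lt_of_limsup_lt hk
  obtain ⟨L1, hL1⟩ := eventually_atTop.1 hkev
  refine lt_of_le_of_lt (b := ENNReal.ofReal (ε / 2)) ?_
    ((ENNReal.ofReal_lt_ofReal_iff hε).2 (by linarith))
  refine limsup_le_of_le (by isBoundedDefault) ?_
  filter_upwards [eventually_ge_atTop l, eventually_ge_atTop L1] with L hLl hLL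
  refine iSup_le fun ξ => ?_
  have hL0 : 0 < L := by linarith
  obtain ⟨n, hn1, hn2⟩ := weylaux_ceil hl hLl
  have hnl : 0 < n * l := by linarith
  rw [weylaux_avg hL0, Set.inter_comm, ← setLIntegral_indicator hTm]
  have hvol : volume (Set.Icc ξ (ξ + n * l) ∩ T) ≤ ENNReal.ofReal δ * ENNReal.ofReal (n * l) := by
    rw [← weylaux_avg hnl]
    refine le_trans ?_ (hL1 (n * l) (by linarith)).le
    exact le_iSup (fun ξ : ℝ => ENNReal.ofReal (1 / (n * l)) *
      volume (Set.Icc ξ (ξ + n * l) ∩ T)) ξ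
  calc _ ≤ ∫⁻ t in Set.Icc ξ (ξ + n * l), T.indicator h t :=
        lintegral_mono_set (Set.Icc_subset_Icc_right (by linarith))
    _ ≤ _ := weylaux_block _ _ hl hblock n ξ
    _ = ENNReal.ofReal c0 * ENNReal.ofReal (n * l)
        + ENNReal.ofReal c1 * volume (Set.Icc ξ (ξ + n * l) ∩ T) := by
        rw [lintegral_add_left measurable_const, weylaux_const, setLIntegral_indicator hTm,
          Set.inter_comm, setLIntegral_const]
    _ ≤ ENNReal.ofReal c0 * ENNReal.ofReal (n * l)
        + ENNReal.ofReal c1 * (ENNReal.ofReal δ * ENNReal.ofReal (n * l)) := by gcongr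
    _ ≤ _ := by
        rw [← ENNReal.ofReal_mul (by positivity), ← ENNReal.ofReal_mul (by positivity),
          ← ENNReal.ofReal_mul (by positivity), ← ENNReal.ofReal_add (by positivity) (by positivity),
          ← ENNReal.ofReal_mul (by positivity)]
        apply ENNReal.ofReal_le_ofReal
        have h3 : c0 = ε / 8 := by rw [hc0, he1]; field_simp; ring
        have h4 : c1 * (δ * (n * l)) = ε / 8 * (n * l) := by rw [hδ]; field_simp
        rw [h4, h3]
        nlinarith

/-- **`W_p(ℝ,U) = W(ℝ,U) ∩ M*_p(ℝ,U)`.**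
A function `f ∈ M_p(ℝ,U)` is Weyl a.p. of order `p` iff it is Weyl a.p. w.r.t. the
bounded metric `ρ'` and satisfies the `M*_p` uniform integrability condition. -/
theorem weyl_ap_order_p_iff {U : Type*} [MetricSpace U] [CompleteSpace U] (x₀ : U)
    (p : ℝ) (hp : 1 ≤ p) (f : ℝ → U) :
    MemWp dist p x₀ f ↔ (MemWp bdist 1 x₀ f ∧ MemMpStar dist p x₀ f) := by
  exact ⟨fun h => ⟨weylaux_fwd1 x₀ p hp f h, weylaux_fwd2 x₀ p hp f h⟩,
    fun h => weylaux_rev x₀ p hp f h.1 h.2⟩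
end
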